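/- arXiv:2203.10025 — 7 statements merged into one kernel-verified Lean document; each statement's English description precedes it below -/
import Mathlib

section
/- For every k > 0 there exist constants C₁, C₂ > 0 (depending only on k) such that for all real a ≥ 0 and x ≥ 0 one has C₁ B(a,x) ≤ ∫₀ˣ e^(-a u) (u/(1+u))^(k-1) du ≤ C₂ B(a,x), where B(a,x) = (x/(1+x))^k · (1+x)/(1+a x)^k · ((1+a(1+x))/(1+a))^(k-1). -/
open MeasureTheory Real

/-!
Write `p = k - 1`, `φ u = (u / (1 + u)) ^ p` and `y = x / (1 + a x)`. Since `1 / y = 1 / x + a`,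
the weight `e^(-a u)` is at least `e⁻¹` on `[0, y]` and at most `e · e^(-u / y)` on `[0, x]`, so
the integral behaves like that of `φ` over `[0, y]`. As `φ` is comparable to `φ y` on `[y / 2, y]`
and dominated by `φ y (1 + (u / y) ^ p)` everywhere, the integral is comparable to `y φ y`. Finally
`B(a, x) = y q ^ p` for a quantity `q` with `y / (1 + y) ≤ q ≤ 2 y / (1 + y)`.
-/

open Set

section Rpow

variable {b s t : ℝ}

lemma rpow_le_rpow_abs_mul_rpow (p : ℝ) (hb : 0 < b) (hs : 0 < s) (hst : s ≤ b * t)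
    (hts : t ≤ b * s) : t ^ p ≤ b ^ |p| * s ^ p := by
  have ht : 0 < t := pos_of_mul_pos_right (hs.trans_le hst) hb.le
  rcases le_total 0 p with hp | hp
  · rw [abs_of_nonneg hp, ← mul_rpow hb.le hs.le]
    exact rpow_le_rpow ht.le hts hp
  · rw [abs_of_nonpos hp, rpow_neg hb.le, ← inv_rpow hb.le, ← mul_rpow (inv_pos.2 hb).le hs.le]
    exact rpow_le_rpow_of_nonpos (by positivity) ((inv_mul_le_iff₀ hb).2 hst) hp

lemma rpow_le_rpow_add_rpow_of_mem_uIcc (p : ℝ) (hb : 0 < b) (hs : 0 < s) (ht : t ∈ uIcc b s) :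
    t ^ p ≤ b ^ p + s ^ p := by
  wlog hbs : b ≤ s generalizing b s
  · rw [add_comm]
    exact this hs hb (uIcc_comm b s ▸ ht) (le_of_not_ge hbs)
  rw [uIcc_of_le hbs] at ht
  rcases le_total 0 p with hp | hp
  · exact (rpow_le_rpow (hb.le.trans ht.1) ht.2 hp).trans (le_add_of_nonneg_left (by positivity))
  · exact (rpow_le_rpow_of_nonpos hb ht.1 hp).trans (le_add_of_nonneg_right (by positivity))

end Rpow

section Saturation

variable {u y : ℝ}

lemma div_one_add_mem_uIcc (hu : 0 ≤ u) (hy : 0 ≤ y) :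
    u / (1 + u) ∈ uIcc (y / (1 + y)) (u / (1 + y)) := by
  rcases le_total u y with h | h
  · refine mem_uIcc_of_ge (by gcongr) ?_
    rw [div_le_div_iff₀ (by positivity) (by positivity)]
    linarith
  · refine mem_uIcc_of_le ?_ (by gcongr)
    rw [div_le_div_iff₀ (by positivity) (by positivity)]
    linarith

lemma div_one_add_rpow_le (p : ℝ) (hu : 0 < u) (hy : 0 < y) :
    (u / (1 + u)) ^ p ≤ (y / (1 + y)) ^ p * (1 + (u / y) ^ p) := by
  have hmul : u / (1 + y) = y / (1 + y) * (u / y) := by field_simp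
  calc (u / (1 + u)) ^ p ≤ (y / (1 + y)) ^ p + (u / (1 + y)) ^ p :=
        rpow_le_rpow_add_rpow_of_mem_uIcc p (by positivity) (by positivity)
          (div_one_add_mem_uIcc hu.le hy.le)
    _ = (y / (1 + y)) ^ p * (1 + (u / y) ^ p) := by
        rw [hmul, mul_rpow (by positivity) (by positivity)]; ring

lemma div_one_add_rpow_le_of_mem_Icc_half (p : ℝ) (hy : 0 < y) (hu : u ∈ Icc (y / 2) y) :
    (y / (1 + y)) ^ p ≤ 2 ^ |p| * (u / (1 + u)) ^ p := by
  obtain ⟨hyu, huy⟩ := hu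
  have hu0 : 0 < u := (half_pos hy).trans_le hyu
  refine rpow_le_rpow_abs_mul_rpow p two_pos (by positivity) ?_ ?_ <;>
    rw [← mul_div_assoc, div_le_div_iff₀ (by positivity) (by positivity)] <;>
    nlinarith [mul_pos hu0 hy]

lemma intervalIntegrable_div_one_add_rpow {p x : ℝ} (hp : -1 < p) (hx : 0 ≤ x) :
    IntervalIntegrable (fun u : ℝ ↦ (u / (1 + u)) ^ p) volume 0 x := by
  have hdom : IntervalIntegrable (fun u : ℝ ↦ (1 / (1 + 1)) ^ p * (1 + (u / 1) ^ p))
      volume 0 x := by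
    simpa only [div_one] using
      (intervalIntegrable_const.add (intervalIntegral.intervalIntegrable_rpow' hp)).const_mul _
  refine hdom.mono_fun' (Measurable.aestronglyMeasurable (by fun_prop)) ?_
  rw [uIoc_of_le hx]
  filter_upwards [ae_restrict_mem measurableSet_Ioc] with u ⟨hu, _⟩
  rw [norm_of_nonneg (by positivity)]
  exact div_one_add_rpow_le p hu one_pos

end Saturation

section GammaKernel

variable {p y : ℝ}

lemma integrableOn_exp_neg_mul_one_add_rpow (hp : -1 < p) :
    IntegrableOn (fun t : ℝ ↦ exp (-t) * (1 + t ^ p)) (Ioi 0) := by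
  have hΓ := GammaIntegral_convergent (neg_lt_iff_pos_add.1 hp)
  rw [add_sub_cancel_right] at hΓ
  simp only [mul_add, mul_one]
  exact (integrableOn_exp_neg_Ioi 0).add hΓ

lemma integral_exp_neg_mul_one_add_rpow (hp : -1 < p) :
    ∫ t in Ioi (0 : ℝ), exp (-t) * (1 + t ^ p) = 1 + Gamma (p + 1) := by
  have hp' : 0 < p + 1 := neg_lt_iff_pos_add.1 hp
  have hΓ := GammaIntegral_convergent hp'
  rw [Gamma_eq_integral hp']
  rw [add_sub_cancel_right] at hΓ ⊢
  simp only [mul_add, mul_one]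
  rw [integral_add (integrableOn_exp_neg_Ioi 0) hΓ, integral_exp_neg_Ioi_zero]

lemma integrableOn_exp_neg_div_mul_one_add_rpow (hp : -1 < p) (hy : 0 < y) :
    IntegrableOn (fun u : ℝ ↦ exp (-(u / y)) * (1 + (u / y) ^ p)) (Ioi 0) := by
  simpa only [inv_mul_eq_div, zero_div] using
    (integrableOn_Ioi_comp_mul_left_iff (fun t : ℝ ↦ exp (-t) * (1 + t ^ p)) 0
      (inv_pos.2 hy)).2 (by simpa using integrableOn_exp_neg_mul_one_add_rpow hp)

lemma integral_exp_neg_div_mul_one_add_rpow (hp : -1 < p) (hy : 0 < y) :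
    ∫ u in Ioi (0 : ℝ), exp (-(u / y)) * (1 + (u / y) ^ p) = y * (1 + Gamma (p + 1)) := by
  rw [← integral_exp_neg_mul_one_add_rpow hp]
  simpa only [inv_mul_eq_div, zero_div, inv_inv, smul_eq_mul] using
    integral_comp_mul_left_Ioi (fun t : ℝ ↦ exp (-t) * (1 + t ^ p)) 0 (inv_pos.2 hy)

end GammaKernel

/-- The effective length of `[0, x]` under the weight `e^(-a u)`: half the harmonic mean of `x` and
`1 / a`, a smooth substitute for `min x (1 / a)` that also makes sense at `a = 0`. -/
noncomputable def effectiveLength (a x : ℝ) : ℝ := x / (1 + a * x)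

section EffectiveLength

variable {a x u : ℝ}

lemma effectiveLength_pos (ha : 0 ≤ a) (hx : 0 < x) : 0 < effectiveLength a x := by
  unfold effectiveLength
  positivity

lemma effectiveLength_le (ha : 0 ≤ a) (hx : 0 ≤ x) : effectiveLength a x ≤ x :=
  div_le_self hx (le_add_of_nonneg_right (mul_nonneg ha hx))

lemma mul_effectiveLength_le_one (ha : 0 ≤ a) (hx : 0 ≤ x) : a * effectiveLength a x ≤ 1 := by
  rw [effectiveLength, ← mul_div_assoc, div_le_one (by positivity)]
  linarith

lemma div_effectiveLength (hx : x ≠ 0) : u / effectiveLength a x = u / x + a * u := by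
  rw [effectiveLength]
  field_simp

lemma exp_neg_mul_le_exp_neg_div_effectiveLength (hx : 0 < x) (hu : u ≤ x) :
    exp (-(a * u)) ≤ exp 1 * exp (-(u / effectiveLength a x)) := by
  have hux : u / x ≤ 1 := (div_le_one hx).2 hu
  rw [← exp_add, exp_le_exp, div_effectiveLength hx.ne']
  linarith

lemma exp_neg_one_le_exp_neg_mul (ha : 0 ≤ a) (hx : 0 ≤ x) (hu : u ≤ effectiveLength a x) :
    exp (-1) ≤ exp (-(a * u)) :=
  exp_le_exp.2 <| neg_le_neg <|
    (mul_le_mul_of_nonneg_left hu ha).trans (mul_effectiveLength_le_one ha hx)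

end EffectiveLength

section LaplaceIntegral

variable {a x c p : ℝ} {w : ℝ → ℝ}

lemma integral_exp_neg_mul_mul_le (ha : 0 ≤ a) (hx : 0 < x) (hp : -1 < p)
    (hw : ∀ u ∈ Ioc 0 x, 0 ≤ w u)
    (hwc : ∀ u ∈ Ioc 0 x, w u ≤ c * (1 + (u / effectiveLength a x) ^ p)) :
    ∫ u in (0 : ℝ)..x, exp (-(a * u)) * w u ≤
      exp 1 * (1 + Gamma (p + 1)) * (effectiveLength a x * c) := by
  have hy := effectiveLength_pos ha hx
  set y := effectiveLength a x
  have hc : 0 ≤ c := by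
    have hxx : x ∈ Ioc 0 x := ⟨hx, le_rfl⟩
    exact nonneg_of_mul_nonneg_left ((hw x hxx).trans (hwc x hxx)) (by positivity)
  let g : ℝ → ℝ := fun u ↦ exp 1 * c * (exp (-(u / y)) * (1 + (u / y) ^ p))
  have hg : IntegrableOn g (Ioi 0) := (integrableOn_exp_neg_div_mul_one_add_rpow hp hy).const_mul _
  have hg0 : ∀ u ∈ Ioi (0 : ℝ), 0 ≤ g u := fun u (hu : 0 < u) ↦ by positivity
  have hle : ∀ u ∈ Ioc 0 x, exp (-(a * u)) * w u ≤ g u := fun u hu ↦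
    calc exp (-(a * u)) * w u
        ≤ exp 1 * exp (-(u / y)) * (c * (1 + (u / y) ^ p)) :=
          mul_le_mul (exp_neg_mul_le_exp_neg_div_effectiveLength hx hu.2) (hwc u hu) (hw u hu)
            (by positivity)
      _ = g u := by ring
  calc ∫ u in (0 : ℝ)..x, exp (-(a * u)) * w u
      = ∫ u in Ioc 0 x, exp (-(a * u)) * w u := intervalIntegral.integral_of_le hx.le
    _ ≤ ∫ u in Ioc 0 x, g u :=
        integral_mono_of_nonneg
          (ae_restrict_of_forall_mem measurableSet_Ioc fun u hu ↦
            mul_nonneg (exp_pos _).le (hw u hu))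
          (hg.mono_set Ioc_subset_Ioi_self)
          (ae_restrict_of_forall_mem measurableSet_Ioc hle)
    _ ≤ ∫ u in Ioi 0, g u :=
        setIntegral_mono_set hg (ae_restrict_of_forall_mem measurableSet_Ioi hg0)
          Ioc_subset_Ioi_self.eventuallyLE
    _ = exp 1 * (1 + Gamma (p + 1)) * (y * c) := by
        rw [integral_const_mul, integral_exp_neg_div_mul_one_add_rpow hp hy]; ring

lemma le_integral_exp_neg_mul_mul (ha : 0 ≤ a) (hx : 0 < x)
    (hwi : IntervalIntegrable w volume 0 x) (hw : ∀ u ∈ Ioc 0 x, 0 ≤ w u)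
    (hcw : ∀ u ∈ Icc (effectiveLength a x / 2) (effectiveLength a x), c ≤ w u) :
    exp (-1) / 2 * (effectiveLength a x * c) ≤ ∫ u in (0 : ℝ)..x, exp (-(a * u)) * w u := by
  have hy := effectiveLength_pos ha hx
  have hyx := effectiveLength_le ha hx.le
  set y := effectiveLength a x
  have hint : IntervalIntegrable (fun u ↦ exp (-(a * u)) * w u) volume 0 x :=
    hwi.continuousOn_mul (by fun_prop)
  have hle : ∀ u ∈ Icc (y / 2) y, exp (-1) * c ≤ exp (-(a * u)) * w u := fun u hu ↦ by
    have hwu : 0 ≤ w u := hw u ⟨(half_pos hy).trans_le hu.1, hu.2.trans hyx⟩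
    calc exp (-1) * c ≤ exp (-1) * w u := by gcongr; exact hcw u hu
      _ ≤ exp (-(a * u)) * w u :=
          mul_le_mul_of_nonneg_right (exp_neg_one_le_exp_neg_mul ha hx.le hu.2) hwu
  calc exp (-1) / 2 * (y * c) = ∫ _ in (y / 2)..y, exp (-1) * c := by
        rw [intervalIntegral.integral_const, smul_eq_mul]; ring
    _ ≤ ∫ u in (y / 2)..y, exp (-(a * u)) * w u := by
        refine intervalIntegral.integral_mono_on (half_le_self hy.le) intervalIntegrable_const
          (hint.mono_set ?_) hle
        rw [uIcc_of_le (half_le_self hy.le), uIcc_of_le hx.le]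
        exact Icc_subset_Icc (half_pos hy).le hyx
    _ ≤ ∫ u in (0 : ℝ)..x, exp (-(a * u)) * w u :=
        intervalIntegral.integral_mono_interval (half_pos hy).le (half_le_self hy.le) hyx
          (ae_restrict_of_forall_mem measurableSet_Ioc fun u hu ↦
            mul_nonneg (exp_pos _).le (hw u hu)) hint

end LaplaceIntegral

section SaturationIntegral

variable {a x p : ℝ}

lemma integral_exp_neg_mul_div_one_add_rpow_le (ha : 0 ≤ a) (hx : 0 < x) (hp : -1 < p) :
    ∫ u in (0 : ℝ)..x, exp (-(a * u)) * (u / (1 + u)) ^ p ≤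
      exp 1 * (1 + Gamma (p + 1)) *
        (effectiveLength a x * (effectiveLength a x / (1 + effectiveLength a x)) ^ p) :=
  integral_exp_neg_mul_mul_le ha hx hp
    (fun u hu ↦ rpow_nonneg (div_nonneg hu.1.le (by linarith [hu.1])) p)
    (fun _ hu ↦ div_one_add_rpow_le p hu.1 (effectiveLength_pos ha hx))

lemma le_integral_exp_neg_mul_div_one_add_rpow (ha : 0 ≤ a) (hx : 0 < x) (hp : -1 < p) :
    exp (-1) / 2 / 2 ^ |p| *
        (effectiveLength a x * (effectiveLength a x / (1 + effectiveLength a x)) ^ p) ≤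
      ∫ u in (0 : ℝ)..x, exp (-(a * u)) * (u / (1 + u)) ^ p := by
  have h := le_integral_exp_neg_mul_mul ha hx (intervalIntegrable_div_one_add_rpow hp hx.le)
    (fun u hu ↦ rpow_nonneg (div_nonneg hu.1.le (by linarith [hu.1])) p)
    (fun u hu ↦ (div_le_iff₀' (by positivity)).2
      (div_one_add_rpow_le_of_mem_Icc_half p (effectiveLength_pos ha hx) hu))
  exact h.trans_eq' (by ring)

end SaturationIntegral

section ClosedForm

variable {a x : ℝ}

/-- The quantity `q` for which the closed form `B(a, x)` equals `effectiveLength a x * q ^ (k - 1)`;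
it is comparable to `y / (1 + y)` with `y = effectiveLength a x`. -/
noncomputable def closedFormBase (a x : ℝ) : ℝ :=
  x / (1 + x) * ((1 + a * (1 + x)) / (1 + a)) / (1 + a * x)

lemma closedForm_eq (k : ℝ) (ha : 0 ≤ a) (hx : 0 < x) :
    (x / (1 + x)) ^ k * ((1 + x) / (1 + a * x) ^ k) * ((1 + a * (1 + x)) / (1 + a)) ^ (k - 1) =
      effectiveLength a x * closedFormBase a x ^ (k - 1) := by
  have hs : 0 < 1 + a * x := by positivity
  have hv : 0 < x / (1 + x) := by positivity
  have hsplit {t : ℝ} (ht : 0 < t) : t ^ k = t ^ (k - 1) * t := by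
    rw [← rpow_add_one ht.ne', sub_add_cancel]
  rw [closedFormBase, effectiveLength, div_rpow (by positivity) hs.le,
    mul_rpow hv.le (by positivity), hsplit hv, hsplit hs]
  field_simp

-- With `s = 1 + a x`, the claim is `1 ≤ (s + a) (s + x) / (s (s + a + x)) ≤ 2`, and numerator and
-- denominator differ by `a x ≤ s ^ 2`.
lemma closedFormBase_mem_Icc (ha : 0 ≤ a) (hx : 0 ≤ x) :
    closedFormBase a x ∈ Icc (effectiveLength a x / (1 + effectiveLength a x))
      (2 * (effectiveLength a x / (1 + effectiveLength a x))) := by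
  have hbase : closedFormBase a x =
      x * (1 + a * x + a) / ((1 + a * x) * (1 + a * x + a + x)) := by
    have : 1 + a * x + a + x = (1 + x) * (1 + a) := by ring
    rw [closedFormBase, this]
    field_simp
    ring
  have hsat : effectiveLength a x / (1 + effectiveLength a x) = x / (1 + a * x + x) := by
    rw [effectiveLength]
    field_simp
  have hax : 0 ≤ a * x := mul_nonneg ha hx
  rw [hbase, hsat]
  generalize hs : 1 + a * x = s
  have hs1 : 1 ≤ s := by linarith
  constructor
  · rw [div_le_div_iff₀ (by positivity) (by positivity), mul_assoc]
    refine mul_le_mul_of_nonneg_left ?_ hx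
    linarith
  · rw [← mul_div_assoc, div_le_div_iff₀ (by positivity) (by positivity), mul_assoc,
      mul_comm 2 x, mul_assoc]
    refine mul_le_mul_of_nonneg_left ?_ hx
    nlinarith [mul_nonneg (zero_le_one.trans hs1) ha, mul_nonneg (zero_le_one.trans hs1) hx]

lemma closedFormBase_rpow_comparable (p : ℝ) (ha : 0 ≤ a) (hx : 0 < x) :
    closedFormBase a x ^ p ≤
        2 ^ |p| * (effectiveLength a x / (1 + effectiveLength a x)) ^ p ∧
      (effectiveLength a x / (1 + effectiveLength a x)) ^ p ≤
        2 ^ |p| * closedFormBase a x ^ p := by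
  have hy := effectiveLength_pos ha hx
  have hv : 0 < effectiveLength a x / (1 + effectiveLength a x) := by positivity
  obtain ⟨hvq, hqv⟩ := closedFormBase_mem_Icc ha hx.le
  have hq := hv.trans_le hvq
  exact ⟨rpow_le_rpow_abs_mul_rpow p two_pos hv (by linarith) hqv,
    rpow_le_rpow_abs_mul_rpow p two_pos hq hqv (by linarith)⟩

end ClosedForm

theorem stmt_1 (k : ℝ) (hk : 0 < k) :
    ∃ C₁ C₂ : ℝ, 0 < C₁ ∧ 0 < C₂ ∧ ∀ a x : ℝ, 0 ≤ a → 0 ≤ x →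
      C₁ * ((x / (1 + x)) ^ k * ((1 + x) / (1 + a * x) ^ k) *
          ((1 + a * (1 + x)) / (1 + a)) ^ (k - 1)) ≤
        (∫ u in (0:ℝ)..x, Real.exp (-(a * u)) * (u / (1 + u)) ^ (k - 1)) ∧
      (∫ u in (0:ℝ)..x, Real.exp (-(a * u)) * (u / (1 + u)) ^ (k - 1)) ≤
        C₂ * ((x / (1 + x)) ^ k * ((1 + x) / (1 + a * x) ^ k) *
          ((1 + a * (1 + x)) / (1 + a)) ^ (k - 1)) := by
  have hΓ : 0 < Gamma (k - 1 + 1) := Gamma_pos_of_pos (by linarith)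
  refine ⟨exp (-1) / 2 / 2 ^ |k - 1| / 2 ^ |k - 1|,
    exp 1 * (1 + Gamma (k - 1 + 1)) * 2 ^ |k - 1|, by positivity, by positivity,
    fun a x ha hx ↦ ?_⟩
  rcases hx.eq_or_lt with rfl | hx
  · simp [zero_rpow hk.ne']
  have hp : -1 < k - 1 := by linarith
  have hy := effectiveLength_pos ha hx
  obtain ⟨hqv, hvq⟩ := closedFormBase_rpow_comparable (k - 1) ha hx
  rw [closedForm_eq k ha hx]
  constructor
  · refine le_trans ?_ (le_integral_exp_neg_mul_div_one_add_rpow ha hx hp)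
    rw [div_mul_eq_mul_div, mul_div_assoc, mul_div_assoc]
    gcongr
    exact (div_le_iff₀' (by positivity)).2 hqv
  · refine (integral_exp_neg_mul_div_one_add_rpow_le ha hx hp).trans ?_
    rw [mul_assoc _ (2 ^ |k - 1|), mul_left_comm (2 ^ |k - 1|)]
    gcongr
end

section
/- Let a ≥ 0 and 0 < k ≤ 1 be real numbers. Then the function F₂(u) = u (1 + a(1+u))^(k-1) / (1 + a u)^k is monotone increasing on [0, ∞); that is, for all 0 ≤ u ≤ v one has F₂(u) ≤ F₂(v). -/
/-!
The function factors as `u / (1 + a * u) * ((1 + a * (1 + u)) / (1 + a * u)) ^ (k - 1)`. The first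
factor increases, while the base `1 + a / (1 + a * u)` of the second decreases and carries the
nonpositive exponent `k - 1`, so both factors are nonnegative and increasing.
-/

open Set

section OrderedField

variable {K : Type*} [Field K] [LinearOrder K] [IsStrictOrderedRing K] {a c : K}

lemma monotoneOn_div_add_mul (hc : 0 < c) (ha : 0 ≤ a) :
    MonotoneOn (fun u : K ↦ u / (c + a * u)) (Ici 0) := by
  intro u (hu : 0 ≤ u) v (hv : 0 ≤ v) huv
  have hcross : u * (c + a * v) ≤ v * (c + a * u) := by
    linear_combination c * huv
  exact (div_le_div_iff₀ (by positivity) (by positivity)).2 hcross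

lemma antitoneOn_add_div_self (ha : 0 ≤ a) :
    AntitoneOn (fun z : K ↦ (z + a) / z) (Ioi 0) := by
  intro y (hy : 0 < y) z (hz : 0 < z) hyz
  calc
    (z + a) / z = 1 + a / z := by rw [add_div, div_self hz.ne']
    _ ≤ 1 + a / y := by gcongr
    _ = (y + a) / y := by rw [add_div, div_self hy.ne']

end OrderedField

lemma mul_rpow_sub_one_div_rpow {y z : ℝ} (hy : 0 ≤ y) (hz : 0 < z) (x k : ℝ) :
    x * y ^ (k - 1) / z ^ k = x / z * (y / z) ^ (k - 1) := by
  rw [Real.div_rpow hy hz.le, div_mul_div_comm, Real.rpow_sub_one hz.ne',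
    mul_div_cancel₀ _ hz.ne']

lemma monotoneOn_rpow_of_antitoneOn {α : Type*} [Preorder α] {s : Set α} {f : α → ℝ} {p : ℝ}
    (hf : AntitoneOn f s) (hpos : ∀ x ∈ s, 0 < f x) (hp : p ≤ 0) :
    MonotoneOn (fun x ↦ f x ^ p) s :=
  fun _ hx _ hy hxy ↦ Real.rpow_le_rpow_of_nonpos (hpos _ hy) (hf hx hy hxy) hp

theorem stmt_2_general {a k : ℝ} (ha : 0 ≤ a) (hk : k ≤ 1) :
    MonotoneOn (fun u : ℝ ↦ u * (1 + a * (1 + u)) ^ (k - 1) / (1 + a * u) ^ k) (Ici 0) := by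
  have hden : ∀ u ∈ Ici (0 : ℝ), 0 < 1 + a * u := fun u (hu : 0 ≤ u) ↦ by positivity
  have hnum : ∀ u ∈ Ici (0 : ℝ), 0 < 1 + a * (1 + u) := fun u (hu : 0 ≤ u) ↦ by positivity
  have hbase : AntitoneOn (fun u ↦ (1 + a * (1 + u)) / (1 + a * u)) (Ici 0) := by
    intro u hu v hv huv
    have hshift (w : ℝ) : 1 + a * (1 + w) = 1 + a * w + a := by ring
    simp only [hshift]
    exact antitoneOn_add_div_self ha (hden u hu) (hden v hv) (by gcongr)
  have hproduct : MonotoneOn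
      (fun u ↦ u / (1 + a * u) * ((1 + a * (1 + u)) / (1 + a * u)) ^ (k - 1)) (Ici 0) :=
    (monotoneOn_div_add_mul one_pos ha).mul
      (monotoneOn_rpow_of_antitoneOn hbase (fun u hu ↦ div_pos (hnum u hu) (hden u hu))
        (sub_nonpos.2 hk))
      (fun u hu ↦ div_nonneg hu (hden u hu).le)
      (fun u hu ↦ Real.rpow_nonneg (div_pos (hnum u hu) (hden u hu)).le _)
  exact hproduct.congr fun u hu ↦
    (mul_rpow_sub_one_div_rpow (hnum u hu).le (hden u hu) u k).symm

theorem stmt_2 (a k : ℝ) (ha : 0 ≤ a) (hk0 : 0 < k) (hk1 : k ≤ 1) :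
    ∀ u v : ℝ, 0 ≤ u → u ≤ v →
      u * (1 + a * (1 + u)) ^ (k - 1) / (1 + a * u) ^ k ≤
        v * (1 + a * (1 + v)) ^ (k - 1) / (1 + a * v) ^ k :=
  fun _ _ hu huv ↦ stmt_2_general ha hk1 hu (hu.trans huv) huv
end

section
/- Let k > 0, u ≥ 0 and a > 0 be real numbers. Then 1/(1+a) ≤ (1+u)/(1+a u)^k · (1 + (1+u) a)^(k-1) ≤ (1+a)^k / a. -/
/-!
Put `x = 1 + a * u ≥ 1`, so that `1 + (1 + u) * a = x + a`. The middle term then factors as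
`(1 + u) / (1 + (1 + u) * a)` times `(1 + a / x) ^ k`. The first factor is the value at `s = 1 + u`
of the increasing function `s / (1 + s * a)`, which equals `1 / (1 + a)` at `s = 1` and tends to
`1 / a` at infinity; the second lies between `1` and `(1 + a) ^ k`.
-/

section OrderedField

variable {K : Type*} [Field K] [LinearOrder K] [IsStrictOrderedRing K] {a s t : K}

lemma div_one_add_mul_le_div_one_add_mul_iff (hs : 0 < 1 + s * a) (ht : 0 < 1 + t * a) :
    s / (1 + s * a) ≤ t / (1 + t * a) ↔ s ≤ t := by
  have cross_sub : t * (1 + s * a) - s * (1 + t * a) = t - s := by ring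
  rw [div_le_div_iff₀ hs ht, ← sub_nonneg, cross_sub, sub_nonneg]

lemma div_one_add_mul_lt_one_div (ha : 0 < a) (hs : 0 < 1 + s * a) :
    s / (1 + s * a) < 1 / a := by
  rw [div_lt_div_iff₀ hs ha, one_mul]
  exact lt_one_add (s * a)

end OrderedField

lemma div_rpow_mul_add_rpow_sub_one {a x : ℝ} (hx : 0 < x) (hxa : 0 < x + a) (c k : ℝ) :
    c / x ^ k * (x + a) ^ (k - 1) = c / (x + a) * (1 + a / x) ^ k := by
  rw [Real.rpow_sub_one hxa.ne', ← same_add_div hx.ne', Real.div_rpow hxa.le hx.le]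
  ring

theorem stmt_4 (k u a : ℝ) (hk : 0 < k) (hu : 0 ≤ u) (ha : 0 < a) :
    1 / (1 + a) ≤ (1 + u) / (1 + a * u) ^ k * (1 + (1 + u) * a) ^ (k - 1) ∧
      (1 + u) / (1 + a * u) ^ k * (1 + (1 + u) * a) ^ (k - 1) ≤ (1 + a) ^ k / a := by
  have hx : 1 ≤ 1 + a * u := le_add_of_nonneg_right (by positivity)
  have hy : 0 < 1 + (1 + u) * a := by positivity
  have factorization : (1 + u) / (1 + a * u) ^ k * (1 + (1 + u) * a) ^ (k - 1) =
      (1 + u) / (1 + (1 + u) * a) * (1 + a / (1 + a * u)) ^ k := by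
    rw [show 1 + (1 + u) * a = 1 + a * u + a by ring]
    exact div_rpow_mul_add_rpow_sub_one (by positivity) (by positivity) _ _
  have fraction_lower : 1 / (1 + a) ≤ (1 + u) / (1 + (1 + u) * a) := by
    simpa only [one_mul] using (div_one_add_mul_le_div_one_add_mul_iff (by positivity) hy).2
      (le_add_of_nonneg_right hu : (1 : ℝ) ≤ 1 + u)
  have fraction_upper : (1 + u) / (1 + (1 + u) * a) ≤ 1 / a :=
    (div_one_add_mul_lt_one_div ha hy).le
  have power_lower : 1 ≤ (1 + a / (1 + a * u)) ^ k :=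
    Real.one_le_rpow (le_add_of_nonneg_right (by positivity)) hk.le
  have power_upper : (1 + a / (1 + a * u)) ^ k ≤ (1 + a) ^ k := by
    gcongr
    exact div_le_self ha.le hx
  rw [factorization, ← one_div_mul_eq_div a]
  exact ⟨fraction_lower.trans (le_mul_of_one_le_right (by positivity) power_lower),
    mul_le_mul fraction_upper power_upper (by positivity) (by positivity)⟩
end

section
/- Fix k > 0 and define f(a, x) = (1 + a(1+x))^(k-1) / ((1 + a x)^k (1 + a)^(k-1)) for a, x ≥ 0. There exist constants C₁, C₂ > 0 depending only on k such that: (i) if a x ≤ 1 then C₁ ≤ f(a,x) ≤ C₂; (ii) if a x ≥ 1 and x ≤ 1 then C₁ (a x)^(-k) ≤ f(a,x) ≤ C₂ (a x)^(-k); (iii) if a x ≥ 1, x ≥ 1 and a ≤ 1 then C₁ (a x)^(-1) ≤ f(a,x) ≤ C₂ (a x)^(-1); (iv) if a x ≥ 1, x ≥ 1 and a ≥ 1 then C₁ a^(-k) x^(-1) ≤ f(a,x) ≤ C₂ a^(-k) x^(-1). -/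
noncomputable def f₆ (k a x : ℝ) : ℝ :=
  (1 + a * (1 + x)) ^ (k - 1) / ((1 + a * x) ^ k * (1 + a) ^ (k - 1))

/-!
In each region every base `1 + a (1 + x)`, `1 + a x`, `1 + a` of `f₆` is comparable, up to a
factor `3`, to one of `1`, `a`, `a x`, `1 + a`. Powers, products and quotients preserve
comparability of positive reals, so the bases may be replaced accordingly. When `a x ≤ 1` or
`x ≤ 1`, both `1 + a (1 + x)` and `1 + a` are replaced by `1 + a`, so their powers cancel.
-/

/-- The positive reals `u` and `v` agree up to the multiplicative constant `C`. Positivity is part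
of the notion, which forces `0 < C` and makes it stable under inverses and real powers. -/
structure ComparableUpTo (C u v : ℝ) : Prop where
  left_pos : 0 < u
  right_pos : 0 < v
  left_le_mul : u ≤ C * v
  right_le_mul : v ≤ C * u

namespace ComparableUpTo

variable {C D u v u' v' : ℝ}

lemma of_le_of_le_mul (hC : 1 ≤ C) (hv : 0 < v) (hvu : v ≤ u) (huv : u ≤ C * v) :
    ComparableUpTo C u v where
  left_pos := hv.trans_le hvu
  right_pos := hv
  left_le_mul := huv
  right_le_mul := hvu.trans (le_mul_of_one_le_left (hv.le.trans hvu) hC)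

lemma const_pos (h : ComparableUpTo C u v) : 0 < C :=
  pos_of_mul_pos_left (h.left_pos.trans_le h.left_le_mul) h.right_pos.le

lemma inv_mul_le (h : ComparableUpTo C u v) : C⁻¹ * v ≤ u :=
  (inv_mul_le_iff₀ h.const_pos).2 h.right_le_mul

lemma mul (h : ComparableUpTo C u v) (h' : ComparableUpTo D u' v') :
    ComparableUpTo (C * D) (u * u') (v * v') where
  left_pos := mul_pos h.left_pos h'.left_pos
  right_pos := mul_pos h.right_pos h'.right_pos
  left_le_mul := (mul_le_mul h.left_le_mul h'.left_le_mul h'.left_pos.le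
    (h.left_pos.le.trans h.left_le_mul)).trans_eq (mul_mul_mul_comm C v D v')
  right_le_mul := (mul_le_mul h.right_le_mul h'.right_le_mul h'.right_pos.le
    (h.right_pos.le.trans h.right_le_mul)).trans_eq (mul_mul_mul_comm C u D u')

lemma inv (h : ComparableUpTo C u v) : ComparableUpTo C u⁻¹ v⁻¹ where
  left_pos := inv_pos.2 h.left_pos
  right_pos := inv_pos.2 h.right_pos
  left_le_mul := by
    rw [← div_eq_mul_inv, le_div_iff₀ h.right_pos, inv_mul_le_iff₀ h.left_pos, mul_comm]
    exact h.right_le_mul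
  right_le_mul := by
    rw [← div_eq_mul_inv, le_div_iff₀ h.left_pos, inv_mul_le_iff₀ h.right_pos, mul_comm]
    exact h.left_le_mul

lemma div (h : ComparableUpTo C u v) (h' : ComparableUpTo D u' v') :
    ComparableUpTo (C * D) (u / u') (v / v') := by
  simpa only [div_eq_mul_inv] using h.mul h'.inv

lemma rpow_of_nonneg (h : ComparableUpTo C u v) {p : ℝ} (hp : 0 ≤ p) :
    ComparableUpTo (C ^ p) (u ^ p) (v ^ p) where
  left_pos := Real.rpow_pos_of_pos h.left_pos p
  right_pos := Real.rpow_pos_of_pos h.right_pos p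
  left_le_mul := (Real.rpow_le_rpow h.left_pos.le h.left_le_mul hp).trans_eq
    (Real.mul_rpow h.const_pos.le h.right_pos.le)
  right_le_mul := (Real.rpow_le_rpow h.right_pos.le h.right_le_mul hp).trans_eq
    (Real.mul_rpow h.const_pos.le h.left_pos.le)

lemma rpow (h : ComparableUpTo C u v) (p : ℝ) :
    ComparableUpTo (C ^ |p|) (u ^ p) (v ^ p) := by
  rcases le_total 0 p with hp | hp
  · simpa only [abs_of_nonneg hp] using h.rpow_of_nonneg hp
  · simpa only [abs_of_nonpos hp, Real.rpow_neg h.left_pos.le, Real.rpow_neg h.right_pos.le,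
      inv_inv] using (h.rpow_of_nonneg (neg_nonneg.2 hp)).inv

end ComparableUpTo

section Regions

variable {a x : ℝ}

lemma f₆_comparableUpTo {C n d e : ℝ} (k : ℝ) (hn : ComparableUpTo C (1 + a * (1 + x)) n)
    (hd : ComparableUpTo C (1 + a * x) d) (he : ComparableUpTo C (1 + a) e) :
    ComparableUpTo (C ^ (2 * |k - 1| + |k|)) (f₆ k a x)
      (n ^ (k - 1) / (d ^ k * e ^ (k - 1))) := by
  have hC : C ^ (2 * |k - 1| + |k|) = C ^ |k - 1| * (C ^ |k| * C ^ |k - 1|) := by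
    rw [← Real.rpow_add hn.const_pos, ← Real.rpow_add hn.const_pos]
    ring_nf
  rw [hC]
  exact (hn.rpow (k - 1)).div ((hd.rpow k).mul (he.rpow (k - 1)))

lemma f₆_comparableUpTo_one (k : ℝ) (ha : 0 ≤ a) (hx : 0 ≤ x) (hax : a * x ≤ 1) :
    ComparableUpTo (3 ^ (2 * |k - 1| + |k|)) (f₆ k a x) 1 := by
  have hax₀ : 0 ≤ a * x := mul_nonneg ha hx
  have hn : ComparableUpTo 3 (1 + a * (1 + x)) (1 + a) := by
    apply ComparableUpTo.of_le_of_le_mul <;> linarith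
  have hd : ComparableUpTo 3 (1 + a * x) 1 := by
    apply ComparableUpTo.of_le_of_le_mul <;> linarith
  have he : ComparableUpTo 3 (1 + a) (1 + a) := by
    apply ComparableUpTo.of_le_of_le_mul <;> linarith
  have hmain : (1 + a) ^ (k - 1) / (1 ^ k * (1 + a) ^ (k - 1)) = 1 := by
    rw [Real.one_rpow, one_mul, div_self (he.rpow (k - 1)).left_pos.ne']
  simpa only [hmain] using f₆_comparableUpTo k hn hd he

lemma f₆_comparableUpTo_mul_rpow_neg (k : ℝ) (ha : 0 ≤ a) (hx : x ≤ 1) (hax : 1 ≤ a * x) :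
    ComparableUpTo (3 ^ (2 * |k - 1| + |k|)) (f₆ k a x) ((a * x) ^ (-k)) := by
  have hax_le : a * x ≤ a := mul_le_of_le_one_right ha hx
  have hn : ComparableUpTo 3 (1 + a * (1 + x)) (1 + a) := by
    apply ComparableUpTo.of_le_of_le_mul <;> linarith
  have hd : ComparableUpTo 3 (1 + a * x) (a * x) := by
    apply ComparableUpTo.of_le_of_le_mul <;> linarith
  have he : ComparableUpTo 3 (1 + a) (1 + a) := by
    apply ComparableUpTo.of_le_of_le_mul <;> linarith
  have hmain : (1 + a) ^ (k - 1) / ((a * x) ^ k * (1 + a) ^ (k - 1)) = (a * x) ^ (-k) := by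
    rw [Real.rpow_neg hd.right_pos.le, div_mul_cancel_right₀ (he.rpow (k - 1)).left_pos.ne']
  simpa only [hmain] using f₆_comparableUpTo k hn hd he

lemma f₆_comparableUpTo_mul_inv (k : ℝ) (ha : 0 ≤ a) (ha₁ : a ≤ 1) (hax : 1 ≤ a * x) :
    ComparableUpTo (3 ^ (2 * |k - 1| + |k|)) (f₆ k a x) (a * x)⁻¹ := by
  have hn : ComparableUpTo 3 (1 + a * (1 + x)) (a * x) := by
    apply ComparableUpTo.of_le_of_le_mul <;> linarith
  have hd : ComparableUpTo 3 (1 + a * x) (a * x) := by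
    apply ComparableUpTo.of_le_of_le_mul <;> linarith
  have he : ComparableUpTo 3 (1 + a) 1 := by
    apply ComparableUpTo.of_le_of_le_mul <;> linarith
  have hmain : (a * x) ^ (k - 1) / ((a * x) ^ k * 1 ^ (k - 1)) = (a * x)⁻¹ := by
    rw [Real.one_rpow, mul_one, ← Real.rpow_sub hn.right_pos, sub_sub_cancel_left,
      Real.rpow_neg_one]
  simpa only [hmain] using f₆_comparableUpTo k hn hd he

lemma f₆_comparableUpTo_rpow_neg_mul_inv (k : ℝ) (ha : 1 ≤ a) (hx : 1 ≤ x) :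
    ComparableUpTo (3 ^ (2 * |k - 1| + |k|)) (f₆ k a x) (a ^ (-k) * x⁻¹) := by
  have ha₀ : 0 < a := one_pos.trans_le ha
  have hle : a ≤ a * x := le_mul_of_one_le_right ha₀.le hx
  have hn : ComparableUpTo 3 (1 + a * (1 + x)) (a * x) := by
    apply ComparableUpTo.of_le_of_le_mul <;> linarith
  have hd : ComparableUpTo 3 (1 + a * x) (a * x) := by
    apply ComparableUpTo.of_le_of_le_mul <;> linarith
  have he : ComparableUpTo 3 (1 + a) a := by
    apply ComparableUpTo.of_le_of_le_mul <;> linarith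
  have hmain : (a * x) ^ (k - 1) / ((a * x) ^ k * a ^ (k - 1)) = a ^ (-k) * x⁻¹ := calc
    _ = (a * x) ^ (-1 : ℝ) / a ^ (k - 1) := by
      rw [← div_div, ← Real.rpow_sub hn.right_pos, sub_sub_cancel_left]
    _ = a⁻¹ / a ^ (k - 1) * x⁻¹ := by
      rw [Real.rpow_neg_one, mul_inv, mul_div_right_comm]
    _ = a ^ (-k) * x⁻¹ := by
      rw [← Real.rpow_neg_one a, ← Real.rpow_sub ha₀]
      ring_nf
  simpa only [hmain] using f₆_comparableUpTo k hn hd he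

end Regions

theorem stmt_6_general (k : ℝ) :
    ∃ C₁ C₂ : ℝ, 0 < C₁ ∧ 0 < C₂ ∧ ∀ a x : ℝ, 0 ≤ a → 0 ≤ x →
      (a * x ≤ 1 → C₁ ≤ f₆ k a x ∧ f₆ k a x ≤ C₂) ∧
      (1 ≤ a * x → x ≤ 1 →
        C₁ * (a * x) ^ (-k) ≤ f₆ k a x ∧ f₆ k a x ≤ C₂ * (a * x) ^ (-k)) ∧
      (1 ≤ a * x → 1 ≤ x → a ≤ 1 →
        C₁ * (a * x)⁻¹ ≤ f₆ k a x ∧ f₆ k a x ≤ C₂ * (a * x)⁻¹) ∧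
      (1 ≤ a * x → 1 ≤ x → 1 ≤ a →
        C₁ * (a ^ (-k) * x⁻¹) ≤ f₆ k a x ∧ f₆ k a x ≤ C₂ * (a ^ (-k) * x⁻¹)) := by
  refine ⟨(3 ^ (2 * |k - 1| + |k|))⁻¹, 3 ^ (2 * |k - 1| + |k|), by positivity, by positivity,
    fun a x ha hx => ⟨fun hax => ?_, fun hax hx₁ => ?_, fun hax _ ha₁ => ?_, fun _ hx₁ ha₁ => ?_⟩⟩
  · have h := f₆_comparableUpTo_one k ha hx hax
    simpa only [mul_one] using And.intro h.inv_mul_le h.left_le_mul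
  · have h := f₆_comparableUpTo_mul_rpow_neg k ha hx₁ hax
    exact ⟨h.inv_mul_le, h.left_le_mul⟩
  · have h := f₆_comparableUpTo_mul_inv k ha ha₁ hax
    exact ⟨h.inv_mul_le, h.left_le_mul⟩
  · have h := f₆_comparableUpTo_rpow_neg_mul_inv k ha₁ hx₁
    exact ⟨h.inv_mul_le, h.left_le_mul⟩

theorem stmt_6 (k : ℝ) (hk : 0 < k) :
    ∃ C₁ C₂ : ℝ, 0 < C₁ ∧ 0 < C₂ ∧ ∀ a x : ℝ, 0 ≤ a → 0 ≤ x →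
      (a * x ≤ 1 → C₁ ≤ f₆ k a x ∧ f₆ k a x ≤ C₂) ∧
      (1 ≤ a * x → x ≤ 1 →
        C₁ * (a * x) ^ (-k) ≤ f₆ k a x ∧ f₆ k a x ≤ C₂ * (a * x) ^ (-k)) ∧
      (1 ≤ a * x → 1 ≤ x → a ≤ 1 →
        C₁ * (a * x)⁻¹ ≤ f₆ k a x ∧ f₆ k a x ≤ C₂ * (a * x)⁻¹) ∧
      (1 ≤ a * x → 1 ≤ x → 1 ≤ a →
        C₁ * (a ^ (-k) * x⁻¹) ≤ f₆ k a x ∧ f₆ k a x ≤ C₂ * (a ^ (-k) * x⁻¹)) :=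
  stmt_6_general k
end

section
/- Fix an integer n ≥ 1 and a real k > 0. There exist constants C₁, C₂ > 0 depending only on n and k such that the following holds. Let x₁ ≥ x₂ ≥ … ≥ x_{n+1} and λ₁ ≥ λ₂ ≥ … ≥ λ_{n+1} be real, and assume x_n − x_{n+1} ≥ x_i − x_{i+1} for every 1 ≤ i ≤ n. Let F(y) = e^(−Σ_{i=1}^n (λ_i−λ_{n+1})(x_i−y_i)) · Π_{1≤i<j≤n} [ (y_i−y_j)(1+(λ_i−λ_j)(1+y_i−y_j))^(k−1) / (1+(λ_i−λ_j)(y_i−y_j))^k ] · Π_{r=1}^n [ Π_{s=1}^r (x_s−y_r)/(1+x_s−y_r) · Π_{s=r+1}^{n+1} (y_r−x_s)/(1+y_r−x_s) ]^(k−1). Let I be the integral of F over Π_{j=1}^n [x_{j+1}, x_j], and let I₁ be the integral of F over Π_{j=1}^{n−1} [x_{j+1}, x_j] × [(x_n+x_{n+1})/2, x_n] (i.e. the same region except y_n is restricted to [(x_n+x_{n+1})/2, x_n]). Then C₁ I ≤ I₁ ≤ C₂ I. -/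
open MeasureTheory Finset

/-- The integrand of the iterated-integral representation for the `Aₙ`
Heckman–Opdam hypergeometric function (indices are `0`-based:
`x i` for `i : Fin (n+1)` corresponds to `x_{i+1}`, etc.). -/
noncomputable def aIntegrand (n : ℕ) (k : ℝ) (x l : Fin (n + 1) → ℝ)
    (y : Fin n → ℝ) : ℝ :=
  Real.exp (-(∑ i : Fin n, (l i.castSucc - l (Fin.last n)) * (x i.castSucc - y i))) *
    (∏ i : Fin n, ∏ j ∈ Finset.Ioi i,
      (y i - y j) * (1 + (l i.castSucc - l j.castSucc) * (1 + (y i - y j))) ^ (k - 1) /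
        (1 + (l i.castSucc - l j.castSucc) * (y i - y j)) ^ k) *
    ∏ r : Fin n, (∏ s : Fin (n + 1),
      if (s : ℕ) ≤ (r : ℕ) then (x s - y r) / (1 + (x s - y r))
      else (y r - x s) / (1 + (y r - x s))) ^ (k - 1)

/-!
Fix all coordinates but the last, `t = y_n ∈ [a, b]`. Up to a factor independent of `t`, the
integrand is the product of a regular part `G t` and of `divOneAdd (t - a) ^ (k - 1)`. Every
difference entering `G t` is `b - t` plus a nonnegative number, so the algebraic factors of `G` at
`s ≤ t` are comparable if `b - s ≤ 4 * (b - t)`, while the exponential increases; hence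
`G s ≤ K * G t`. With `c` the midpoint of `[a, b]`, this gives `G ≤ K * G c` on `[a, c]` and
`G c ≤ K * G` on `[c, (c + b) / 2]`. The remaining factor is comparable to
`divOneAdd (c - a) ^ (k - 1)` on `[c, b]`, and its integral over `[a, c]` is at most a constant
times `(c - a) * divOneAdd (c - a) ^ (k - 1)` because `k - 1 > -1`. So the upper half carries a
fixed proportion of the integral over each fibre.
-/

section PowerComparison

variable {a b r p u v Λ k : ℝ}

lemma rpow_le_rpow_abs_mul_rpow_s10 (ha : 0 ≤ a) (hb : 0 ≤ b) (hr : 0 ≤ r) (hab : a ≤ r * b)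
    (hba : b ≤ r * a) : a ^ p ≤ r ^ |p| * b ^ p := by
  rcases le_or_gt 0 p with hp | hp
  · rw [abs_of_nonneg hp, ← Real.mul_rpow hr hb]
    exact Real.rpow_le_rpow ha hab hp
  · rcases ha.eq_or_lt with rfl | ha'
    · rw [Real.zero_rpow hp.ne]
      positivity
    have hrb : 0 < r * b := ha'.trans_le hab
    have hb' : 0 < b := pos_of_mul_pos_right hrb hr
    have hr' : 0 < r := pos_of_mul_pos_left hrb hb
    rw [abs_of_neg hp, Real.rpow_neg hr, ← div_eq_inv_mul, le_div_iff₀' (by positivity),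
      ← Real.mul_rpow hr ha]
    exact Real.rpow_le_rpow_of_nonpos hb' hba hp.le

/-- The map `u ↦ u / (1 + u)` through which the differences `|x s - y r|` enter the integrand. -/
noncomputable def divOneAdd (u : ℝ) : ℝ := u / (1 + u)

lemma divOneAdd_nonneg (hu : 0 ≤ u) : 0 ≤ divOneAdd u := by
  unfold divOneAdd
  positivity

lemma divOneAdd_le_mul_divOneAdd (hu : 0 ≤ u) (hv : 0 ≤ v) (hr : 1 ≤ r) (huv : u ≤ r * v) :
    divOneAdd u ≤ r * divOneAdd v := by
  unfold divOneAdd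
  rw [← mul_div_assoc, div_le_div_iff₀ (by positivity) (by positivity)]
  nlinarith [mul_nonneg (mul_nonneg hu hv) (sub_nonneg.2 hr)]

lemma divOneAdd_mono (hu : 0 ≤ u) (huv : u ≤ v) : divOneAdd u ≤ divOneAdd v := by
  simpa using divOneAdd_le_mul_divOneAdd hu (hu.trans huv) le_rfl (by simpa using huv)

lemma divOneAdd_rpow_le_mul (hu : 0 ≤ u) (hv : 0 ≤ v) (hr : 1 ≤ r) (huv : u ≤ r * v)
    (hvu : v ≤ r * u) : divOneAdd u ^ p ≤ r ^ |p| * divOneAdd v ^ p :=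
  rpow_le_rpow_abs_mul_rpow_s10 (divOneAdd_nonneg hu) (divOneAdd_nonneg hv) (by positivity)
    (divOneAdd_le_mul_divOneAdd hu hv hr huv) (divOneAdd_le_mul_divOneAdd hv hu hr hvu)

lemma divOneAdd_rpow_sub_one_le (hu : 0 ≤ u) (huv : u ≤ v) :
    divOneAdd u ^ (k - 1) ≤ (u / v) ^ (min k 1 - 1) * divOneAdd v ^ (k - 1) := by
  have hv : 0 ≤ v := hu.trans huv
  rcases le_or_gt 1 k with hk | hk
  · rw [min_eq_right hk, sub_self, Real.rpow_zero, one_mul]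
    exact Real.rpow_le_rpow (divOneAdd_nonneg hu) (divOneAdd_mono hu huv) (by linarith)
  · rw [min_eq_left hk.le, ← Real.mul_rpow (div_nonneg hu hv) (divOneAdd_nonneg hv)]
    rcases hu.eq_or_lt with rfl | hu'
    · simp [divOneAdd]
    have hv' : 0 < v := hu'.trans_le huv
    refine Real.rpow_le_rpow_of_nonpos (by unfold divOneAdd; positivity) ?_ (by linarith)
    calc u / v * divOneAdd v = u / (1 + v) := by
          unfold divOneAdd
          field_simp
      _ ≤ divOneAdd u := by
          unfold divOneAdd
          gcongr

/-- The factor of the integrand attached to a pair `i < j`, in terms of `Λ = λ i - λ j` and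
`v = y i - y j`. -/
noncomputable def pairFactor (k Λ v : ℝ) : ℝ :=
  v * (1 + Λ * (1 + v)) ^ (k - 1) / (1 + Λ * v) ^ k

lemma pairFactor_nonneg (hΛ : 0 ≤ Λ) (hv : 0 ≤ v) : 0 ≤ pairFactor k Λ v := by
  unfold pairFactor
  positivity

lemma pairFactor_le_mul (hk : 0 ≤ k) (hΛ : 0 ≤ Λ) (hu : 0 ≤ u) (huv : u ≤ v)
    (hvu : v ≤ r * u) (hr : 1 ≤ r) :
    pairFactor k Λ v ≤ r * r ^ |k - 1| * pairFactor k Λ u := by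
  have hv : 0 ≤ v := hu.trans huv
  have hmono : Λ * u ≤ Λ * v := by gcongr
  have hscale : Λ * v ≤ r * (Λ * u) := by
    calc Λ * v ≤ Λ * (r * u) := by gcongr
      _ = r * (Λ * u) := by ring
  have hbase : 1 + Λ ≤ r * (1 + Λ) := le_mul_of_one_le_left (by positivity) hr
  have hpow : (1 + Λ * (1 + v)) ^ (k - 1) ≤ r ^ |k - 1| * (1 + Λ * (1 + u)) ^ (k - 1) := by
    refine rpow_le_rpow_abs_mul_rpow_s10 (by positivity) (by positivity) (by positivity)
      (by linarith) ?_
    exact le_trans (by linarith) (le_mul_of_one_le_left (by positivity) hr)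
  unfold pairFactor
  calc v * (1 + Λ * (1 + v)) ^ (k - 1) / (1 + Λ * v) ^ k
      ≤ r * u * (r ^ |k - 1| * (1 + Λ * (1 + u)) ^ (k - 1)) / (1 + Λ * u) ^ k := by gcongr
    _ = r * r ^ |k - 1| * (u * (1 + Λ * (1 + u)) ^ (k - 1) / (1 + Λ * u) ^ k) := by ring

end PowerComparison

section Product

variable {ι : Type*} [Fintype ι] {b r s t k p : ℝ} {Λ z : ι → ℝ}

lemma prod_divOneAdd_sub_nonneg (hz : ∀ i, b ≤ z i) (ht : t ≤ b) :
    0 ≤ ∏ i, divOneAdd (z i - t) :=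
  prod_nonneg fun i _ ↦ divOneAdd_nonneg (sub_nonneg.2 (ht.trans (hz i)))

lemma prod_divOneAdd_sub_rpow_le_mul (hz : ∀ i, b ≤ z i) (hst : s ≤ t) (ht : t ≤ b) (hr : 1 ≤ r)
    (hbst : b - s ≤ r * (b - t)) :
    (∏ i, divOneAdd (z i - s)) ^ p ≤
      (r ^ Fintype.card ι) ^ |p| * (∏ i, divOneAdd (z i - t)) ^ p := by
  have hs₀ := prod_divOneAdd_sub_nonneg hz (hst.trans ht)
  have ht₀ := prod_divOneAdd_sub_nonneg hz ht
  refine rpow_le_rpow_abs_mul_rpow_s10 hs₀ ht₀ (by positivity) ?_ ?_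
  · rw [← card_univ, ← prod_const, ← prod_mul_distrib]
    refine prod_le_prod (fun i _ ↦ divOneAdd_nonneg ?_) fun i _ ↦
      divOneAdd_le_mul_divOneAdd ?_ ?_ hr ?_ <;> nlinarith [hz i]
  · refine le_trans ?_ (le_mul_of_one_le_left hs₀ (one_le_pow₀ hr))
    refine prod_le_prod (fun i _ ↦ divOneAdd_nonneg ?_) fun i _ ↦ divOneAdd_mono ?_ ?_ <;>
      linarith [hz i]

lemma prod_pairFactor_sub_nonneg (hΛ : ∀ i, 0 ≤ Λ i) (hz : ∀ i, b ≤ z i) (ht : t ≤ b) :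
    0 ≤ ∏ i, pairFactor k (Λ i) (z i - t) :=
  prod_nonneg fun i _ ↦ pairFactor_nonneg (hΛ i) (sub_nonneg.2 (ht.trans (hz i)))

lemma prod_pairFactor_sub_le_mul (hk : 0 ≤ k) (hΛ : ∀ i, 0 ≤ Λ i) (hz : ∀ i, b ≤ z i)
    (hst : s ≤ t) (ht : t ≤ b) (hr : 1 ≤ r) (hbst : b - s ≤ r * (b - t)) :
    ∏ i, pairFactor k (Λ i) (z i - s) ≤
      (r * r ^ |k - 1|) ^ Fintype.card ι * ∏ i, pairFactor k (Λ i) (z i - t) := by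
  rw [← card_univ, ← prod_const, ← prod_mul_distrib]
  refine prod_le_prod (fun i _ ↦ pairFactor_nonneg (hΛ i) ?_) fun i _ ↦
    pairFactor_le_mul hk (hΛ i) ?_ ?_ ?_ hr <;> nlinarith [hz i]

end Product

section IntervalIntegral

variable {a M k K : ℝ} {G : ℝ → ℝ}

lemma setLIntegral_Icc_div_rpow_sub_one {κ : ℝ} (hM : 0 < M) (hκ : 0 < κ) :
    ∫⁻ t in Set.Icc a (a + M), ENNReal.ofReal (((t - a) / M) ^ (κ - 1)) =
      ENNReal.ofReal (M / κ) := by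
  have hint : IntervalIntegrable (fun t ↦ ((t - a) / M) ^ (κ - 1)) volume a (a + M) := by
    have hpow : IntervalIntegrable (fun u : ℝ ↦ u ^ (κ - 1)) volume 0 1 :=
      intervalIntegral.intervalIntegrable_rpow' (by linarith)
    simpa [div_eq_inv_mul, add_comm] using (hpow.comp_mul_left (c := M⁻¹)).comp_sub_right a
  have hval : ∫ t in a..(a + M), ((t - a) / M) ^ (κ - 1) = M / κ := by
    rw [intervalIntegral.integral_comp_sub_right (fun u ↦ (u / M) ^ (κ - 1)) a,
      intervalIntegral.integral_comp_div (fun u ↦ u ^ (κ - 1)) hM.ne', sub_self,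
      add_sub_cancel_left, zero_div, div_self hM.ne', integral_rpow (Or.inl (by linarith))]
    simp [Real.zero_rpow hκ.ne', div_eq_mul_inv]
  rw [setLIntegral_congr Ioc_ae_eq_Icc.symm, ← ofReal_integral_eq_lintegral_ofReal,
    ← intervalIntegral.integral_of_le (by linarith), hval]
  · exact (intervalIntegrable_iff_integrableOn_Ioc_of_le (by linarith)).1 hint
  · filter_upwards [ae_restrict_mem measurableSet_Ioc] with t ht
    exact Real.rpow_nonneg (div_nonneg (by linarith [ht.1]) hM.le) _

lemma setLIntegral_lower_half_le (hk : 0 < k) (hM : 0 < M) (hK : 0 ≤ K) (hG₀ : 0 ≤ G (a + M))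
    (hG : ∀ t ∈ Set.Icc a (a + M), G t ≤ K * G (a + M)) :
    ∫⁻ t in Set.Icc a (a + M), ENNReal.ofReal (G t * divOneAdd (t - a) ^ (k - 1)) ≤
      ENNReal.ofReal (K / min k 1 * (M * (G (a + M) * divOneAdd M ^ (k - 1)))) := by
  have hκ : 0 < min k 1 := lt_min hk one_pos
  have hσ : 0 ≤ divOneAdd M ^ (k - 1) := Real.rpow_nonneg (divOneAdd_nonneg hM.le) _
  set c := K * G (a + M) * divOneAdd M ^ (k - 1)
  have hc₀ : 0 ≤ c := by positivity
  calc ∫⁻ t in Set.Icc a (a + M), ENNReal.ofReal (G t * divOneAdd (t - a) ^ (k - 1))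
      ≤ ∫⁻ t in Set.Icc a (a + M),
          ENNReal.ofReal c * ENNReal.ofReal (((t - a) / M) ^ (min k 1 - 1)) := by
        refine setLIntegral_mono' measurableSet_Icc fun t ht ↦ ?_
        have hta : 0 ≤ t - a := sub_nonneg.2 ht.1
        rw [← ENNReal.ofReal_mul hc₀]
        refine ENNReal.ofReal_le_ofReal ?_
        calc G t * divOneAdd (t - a) ^ (k - 1)
            ≤ K * G (a + M) * (((t - a) / M) ^ (min k 1 - 1) * divOneAdd M ^ (k - 1)) :=
              mul_le_mul (hG t ht) (divOneAdd_rpow_sub_one_le hta (by linarith [ht.2]))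
                (Real.rpow_nonneg (divOneAdd_nonneg hta) _) (by positivity)
          _ = c * ((t - a) / M) ^ (min k 1 - 1) := by ring
    _ = ENNReal.ofReal c * ENNReal.ofReal (M / min k 1) := by
        rw [lintegral_const_mul' _ _ ENNReal.ofReal_ne_top,
          setLIntegral_Icc_div_rpow_sub_one hM hκ]
    _ = ENNReal.ofReal (K / min k 1 * (M * (G (a + M) * divOneAdd M ^ (k - 1)))) := by
        rw [← ENNReal.ofReal_mul hc₀]
        congr 1
        ring

lemma le_setLIntegral_upper_half (hM : 0 ≤ M) (hK : 0 ≤ K) (hG₀ : 0 ≤ G (a + M))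
    (hG : ∀ t ∈ Set.Icc (a + M) (a + M + M / 2), G (a + M) ≤ K * G t) :
    ENNReal.ofReal (M / 2 * (G (a + M) * divOneAdd M ^ (k - 1))) ≤
      ENNReal.ofReal (K * 2 ^ |k - 1|) * ∫⁻ t in Set.Icc (a + M) (a + 2 * M),
        ENNReal.ofReal (G t * divOneAdd (t - a) ^ (k - 1)) := by
  have hσ : 0 ≤ divOneAdd M ^ (k - 1) := Real.rpow_nonneg (divOneAdd_nonneg hM) _
  rw [← lintegral_const_mul' _ _ ENNReal.ofReal_ne_top]
  calc ENNReal.ofReal (M / 2 * (G (a + M) * divOneAdd M ^ (k - 1)))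
      = ∫⁻ _ in Set.Icc (a + M) (a + M + M / 2),
          ENNReal.ofReal (G (a + M) * divOneAdd M ^ (k - 1)) := by
        rw [setLIntegral_const, Real.volume_Icc, add_sub_cancel_left, mul_comm,
          ENNReal.ofReal_mul (by positivity)]
    _ ≤ ∫⁻ t in Set.Icc (a + M) (a + M + M / 2), ENNReal.ofReal (K * 2 ^ |k - 1|) *
          ENNReal.ofReal (G t * divOneAdd (t - a) ^ (k - 1)) := by
        refine setLIntegral_mono' measurableSet_Icc fun t ht ↦ ?_
        rw [← ENNReal.ofReal_mul (by positivity)]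
        refine ENNReal.ofReal_le_ofReal ?_
        calc G (a + M) * divOneAdd M ^ (k - 1)
            ≤ K * G t * (2 ^ |k - 1| * divOneAdd (t - a) ^ (k - 1)) :=
              mul_le_mul (hG t ht)
                (divOneAdd_rpow_le_mul hM (by linarith [ht.1]) one_le_two (by linarith [ht.1])
                  (by linarith [ht.2])) hσ (hG₀.trans (hG t ht))
          _ = K * 2 ^ |k - 1| * (G t * divOneAdd (t - a) ^ (k - 1)) := by ring
    _ ≤ ∫⁻ t in Set.Icc (a + M) (a + 2 * M), ENNReal.ofReal (K * 2 ^ |k - 1|) *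
          ENNReal.ofReal (G t * divOneAdd (t - a) ^ (k - 1)) :=
        lintegral_mono_set (Set.Icc_subset_Icc_right (by linarith))

/-- The constant `C` bounding the integral of `G t * divOneAdd (t - a) ^ (k - 1)` over `[a, b]` by
`C` times the one over the upper half, when `G s ≤ K * G t` for all `s ≤ t` in `[a, b]` with
`b - s ≤ 4 * (b - t)`. -/
noncomputable def halvingConst (k K : ℝ) : ℝ :=
  1 + 2 * (K / min k 1) * (K * 2 ^ |k - 1|)

lemma halvingConst_pos (hk : 0 < k) (hK : 0 ≤ K) : 0 < halvingConst k K := by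
  unfold halvingConst
  positivity

lemma setLIntegral_Icc_le_halvingConst_mul (hk : 0 < k) (hM : 0 ≤ M) (hK : 0 ≤ K)
    (hG₀ : 0 ≤ G (a + M))
    (hG : ∀ s t, a ≤ s → s ≤ t → t ≤ a + 2 * M → a + 2 * M - s ≤ 4 * (a + 2 * M - t) →
      G s ≤ K * G t) :
    ∫⁻ t in Set.Icc a (a + 2 * M), ENNReal.ofReal (G t * divOneAdd (t - a) ^ (k - 1)) ≤
      ENNReal.ofReal (halvingConst k K) * ∫⁻ t in Set.Icc (a + M) (a + 2 * M),
        ENNReal.ofReal (G t * divOneAdd (t - a) ^ (k - 1)) := by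
  rcases hM.eq_or_lt with rfl | hM'
  · simp
  have hlower := setLIntegral_lower_half_le hk hM' hK hG₀ fun t ht ↦
    hG t (a + M) ht.1 ht.2 (by linarith) (by linarith [ht.1])
  have hupper := le_setLIntegral_upper_half (k := k) hM hK hG₀ fun t ht ↦
    hG (a + M) t (by linarith) ht.1 (by linarith [ht.2]) (by linarith [ht.2])
  set upper := ∫⁻ t in Set.Icc (a + M) (a + 2 * M),
    ENNReal.ofReal (G t * divOneAdd (t - a) ^ (k - 1))
  set g := G (a + M) * divOneAdd M ^ (k - 1)
  have hsplit : K / min k 1 * (M * g) = 2 * (K / min k 1) * (M / 2 * g) := by ring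
  rw [← Set.Icc_union_Icc_eq_Icc (b := a + M) (by linarith) (by linarith)]
  refine (lintegral_union_le _ _ _).trans ?_
  rw [halvingConst, ENNReal.ofReal_add one_pos.le (by positivity), ENNReal.ofReal_one, add_mul,
    one_mul, add_comm]
  refine add_le_add_right ?_ upper
  calc _ ≤ ENNReal.ofReal (2 * (K / min k 1) * (M / 2 * g)) := hsplit ▸ hlower
    _ ≤ ENNReal.ofReal (2 * (K / min k 1)) * (ENNReal.ofReal (K * 2 ^ |k - 1|) * upper) := by
        rw [ENNReal.ofReal_mul (by positivity)]
        gcongr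
    _ = ENNReal.ofReal (2 * (K / min k 1) * (K * 2 ^ |k - 1|)) * upper := by
        rw [ENNReal.ofReal_mul (p := 2 * (K / min k 1)) (by positivity), mul_assoc]

end IntervalIntegral

section ProductMeasure

variable {α : Type*} [MeasureSpace α] [SigmaFinite (volume : Measure α)] {m : ℕ}

lemma setLIntegral_univ_pi_snoc (s : Fin (m + 1) → Set α) {f : (Fin (m + 1) → α) → ENNReal}
    (hf : Measurable f) :
    ∫⁻ y in Set.univ.pi s, f y =
      ∫⁻ z in Set.univ.pi fun j : Fin m ↦ s j.castSucc, ∫⁻ t in s (Fin.last m),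
        f (Fin.snoc (α := fun _ ↦ α) z t) := by
  let e := (MeasurableEquiv.piFinSuccAbove (fun _ : Fin (m + 1) ↦ α) (Fin.last m)).symm
  have he : MeasurePreserving e := (volume_preserving_piFinSuccAbove _ _).symm
  have he_apply (t : α) (z : Fin m → α) : e (t, z) = Fin.snoc (α := fun _ ↦ α) z t := by
    simp [e, MeasurableEquiv.piFinSuccAbove, Fin.insertNthEquiv, Fin.insertNth_last']
  have hpre : e ⁻¹' Set.univ.pi s =
      s (Fin.last m) ×ˢ Set.univ.pi fun j : Fin m ↦ s j.castSucc := by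
    ext ⟨t, z⟩
    simp only [Set.mem_preimage, Set.mem_univ_pi, Set.mem_prod, he_apply, Fin.forall_fin_succ',
      Fin.snoc_castSucc, Fin.snoc_last, and_comm]
  rw [← he.setLIntegral_comp_preimage_emb e.measurableEmbedding, hpre,
    Measure.volume_eq_prod, ← Measure.prod_restrict, lintegral_prod_symm]
  · simp only [he_apply]
  · exact (hf.comp e.measurable).aemeasurable

lemma setLIntegral_univ_pi_le_of_snoc {s s' : Fin (m + 1) → Set α}
    {f : (Fin (m + 1) → α) → ENNReal} {C : ENNReal} (hf : Measurable f) (hC : C ≠ ⊤)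
    (hs : ∀ j : Fin m, MeasurableSet (s j.castSucc))
    (hs' : ∀ j : Fin m, s' j.castSucc = s j.castSucc)
    (h : ∀ z ∈ Set.univ.pi fun j : Fin m ↦ s j.castSucc,
      ∫⁻ t in s (Fin.last m), f (Fin.snoc (α := fun _ ↦ α) z t) ≤
        C * ∫⁻ t in s' (Fin.last m), f (Fin.snoc (α := fun _ ↦ α) z t)) :
    ∫⁻ y in Set.univ.pi s, f y ≤ C * ∫⁻ y in Set.univ.pi s', f y := by
  rw [setLIntegral_univ_pi_snoc s hf, setLIntegral_univ_pi_snoc s' hf,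
    ← lintegral_const_mul' _ _ hC]
  simp only [hs']
  exact setLIntegral_mono' (MeasurableSet.univ_pi hs) h

end ProductMeasure

lemma setIntegral_le_mul_and_le_of_setLIntegral_le {α : Type*} [MeasurableSpace α]
    {μ : Measure α} {s t : Set α} {f : α → ℝ} {C : ℝ} (ht : MeasurableSet t) (hst : s ⊆ t)
    (hf : AEStronglyMeasurable f (μ.restrict t)) (hf₀ : ∀ y ∈ t, 0 ≤ f y) (hC : 0 ≤ C)
    (h : ∫⁻ y in t, ENNReal.ofReal (f y) ∂μ ≤
      ENNReal.ofReal C * ∫⁻ y in s, ENNReal.ofReal (f y) ∂μ) :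
    ∫ y in t, f y ∂μ ≤ C * ∫ y in s, f y ∂μ ∧ ∫ y in s, f y ∂μ ≤ ∫ y in t, f y ∂μ := by
  have hle : μ.restrict s ≤ μ.restrict t := Measure.restrict_mono_set μ hst
  have ht₀ : 0 ≤ᵐ[μ.restrict t] f := by
    filter_upwards [ae_restrict_mem ht] with y hy using hf₀ y hy
  have hs₀ : 0 ≤ᵐ[μ.restrict s] f := ae_mono hle ht₀
  by_cases hint : IntegrableOn f s μ
  · have hlt : ∫⁻ y in t, ENNReal.ofReal (f y) ∂μ < ⊤ :=
      h.trans_lt (ENNReal.mul_lt_top ENNReal.ofReal_lt_top hint.lintegral_lt_top)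
    have hint' : IntegrableOn f t μ :=
      ⟨hf, (hasFiniteIntegral_iff_ofReal ht₀).2 hlt⟩
    refine ⟨?_, integral_mono_measure hle ht₀ hint'⟩
    rw [← ofReal_integral_eq_lintegral_ofReal hint hs₀,
      ← ofReal_integral_eq_lintegral_ofReal hint' ht₀, ← ENNReal.ofReal_mul hC] at h
    exact (ENNReal.ofReal_le_ofReal_iff (mul_nonneg hC (integral_nonneg_of_ae hs₀))).1 h
  · have hint' : ¬ IntegrableOn f t μ := fun h' ↦ hint (h'.mono_set hst)
    simp [integral_undef hint, integral_undef hint']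

lemma prod_prod_Ioi_castSucc {M : Type*} [CommMonoid M] {m : ℕ}
    (f : Fin (m + 1) → Fin (m + 1) → M) :
    ∏ i, ∏ j ∈ Ioi i, f i j =
      (∏ i : Fin m, ∏ j ∈ Ioi i, f i.castSucc j.castSucc) *
        ∏ i : Fin m, f i.castSucc (Fin.last m) := by
  have hIoi (i : Fin m) :
      Ioi i.castSucc = cons (Fin.last m) ((Ioi i).map Fin.castSuccEmb) (by simp) := by
    ext j
    refine Fin.lastCases ?_ (fun j ↦ ?_) j <;> simp [Fin.castSucc_lt_last, Fin.le_last]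
  have hIoi_last : Ioi (Fin.last m) = ∅ := Ioi_eq_empty.2 isMax_top
  rw [Fin.prod_univ_castSucc, ← prod_mul_distrib, hIoi_last, prod_empty, mul_one]
  simp only [hIoi, prod_cons, prod_map, Fin.coe_castSuccEmb, mul_comm]

section Interlacing

variable {n m : ℕ} {k : ℝ}

/-- The box of the points `y` interlacing with `x`, that is `x j.succ ≤ y j ≤ x j.castSucc`: the
domain of integration of `I`. -/
def interlacingBox (x : Fin (n + 1) → ℝ) : Set (Fin n → ℝ) :=
  Set.univ.pi fun j ↦ Set.Icc (x j.succ) (x j.castSucc)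

/-- The part of `interlacingBox x` where the last coordinate lies in the upper half of its
interval: the domain of integration of `I₁`. -/
def upperInterlacingBox (x : Fin (n + 1) → ℝ) : Set (Fin n → ℝ) :=
  Set.univ.pi fun j ↦
    Set.Icc (if (j : ℕ) = n - 1 then (x j.castSucc + x j.succ) / 2 else x j.succ) (x j.castSucc)

lemma measurableSet_interlacingBox (x : Fin (n + 1) → ℝ) : MeasurableSet (interlacingBox x) :=
  MeasurableSet.univ_pi fun _ ↦ measurableSet_Icc

lemma upperInterlacingBox_subset {x : Fin (n + 1) → ℝ} (hx : Antitone x) :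
    upperInterlacingBox x ⊆ interlacingBox x := by
  refine Set.pi_mono fun j _ ↦ Set.Icc_subset_Icc_left ?_
  have hj : x j.succ ≤ x j.castSucc := hx Fin.castSucc_lt_succ.le
  split_ifs <;> linarith

lemma antitone_of_mem_interlacingBox {x : Fin (n + 1) → ℝ} (hx : Antitone x) {y : Fin n → ℝ}
    (hy : y ∈ interlacingBox x) : Antitone y := by
  rw [interlacingBox, Set.mem_univ_pi] at hy
  refine antitone_iff_forall_lt.2 fun i j hij ↦ ?_
  calc y j ≤ x j.castSucc := (hy j).2
    _ ≤ x i.succ := hx (Fin.succ_le_castSucc_iff.2 hij)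
    _ ≤ y i := (hy i).1

/-- The product over all `x s` of the factors of the integrand attached to `y r = t`. -/
noncomputable def crossFactor (x : Fin (n + 1) → ℝ) (r : Fin n) (t : ℝ) : ℝ :=
  ∏ s : Fin (n + 1), if (s : ℕ) ≤ (r : ℕ) then divOneAdd (x s - t) else divOneAdd (t - x s)

lemma crossFactor_nonneg {x : Fin (n + 1) → ℝ} (hx : Antitone x) {r : Fin n} {t : ℝ}
    (ht : t ∈ Set.Icc (x r.succ) (x r.castSucc)) : 0 ≤ crossFactor x r t := by
  refine prod_nonneg fun s _ ↦ ?_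
  split_ifs with hsr
  · have hxs : x r.castSucc ≤ x s := hx hsr
    exact divOneAdd_nonneg (by linarith [ht.2])
  · have hxs : x s ≤ x r.succ := hx (Fin.castSucc_lt_iff_succ_le.1 (not_le.1 hsr))
    exact divOneAdd_nonneg (by linarith [ht.1])

lemma crossFactor_last (x : Fin (m + 1 + 1) → ℝ) (t : ℝ) :
    crossFactor x (Fin.last m) t =
      (∏ s : Fin (m + 1), divOneAdd (x s.castSucc - t)) * divOneAdd (t - x (Fin.last (m + 1))) := by
  rw [crossFactor, Fin.prod_univ_castSucc]
  simp [Fin.is_le]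

lemma aIntegrand_eq (k : ℝ) (x l : Fin (n + 1) → ℝ) (y : Fin n → ℝ) :
    aIntegrand n k x l y =
      Real.exp (-∑ i : Fin n, (l i.castSucc - l (Fin.last n)) * (x i.castSucc - y i)) *
        (∏ i : Fin n, ∏ j ∈ Ioi i, pairFactor k (l i.castSucc - l j.castSucc) (y i - y j)) *
        ∏ r : Fin n, crossFactor x r (y r) ^ (k - 1) :=
  rfl

lemma prod_prod_pairFactor_nonneg {l y : Fin n → ℝ} (hl : Antitone l) (hy : Antitone y) :
    0 ≤ ∏ i : Fin n, ∏ j ∈ Ioi i, pairFactor k (l i - l j) (y i - y j) := by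
  refine prod_nonneg fun i _ ↦ prod_nonneg fun j hj ↦ ?_
  have hij : i ≤ j := (mem_Ioi.1 hj).le
  exact pairFactor_nonneg (sub_nonneg.2 (hl hij)) (sub_nonneg.2 (hy hij))

lemma aIntegrand_nonneg {x l : Fin (n + 1) → ℝ} (hx : Antitone x) (hl : Antitone l)
    {y : Fin n → ℝ} (hy : y ∈ interlacingBox x) : 0 ≤ aIntegrand n k x l y := by
  rw [aIntegrand_eq]
  refine mul_nonneg (mul_nonneg (Real.exp_nonneg _) ?_) ?_
  · exact prod_prod_pairFactor_nonneg (hl.comp_monotone Fin.strictMono_castSucc.monotone)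
      (antitone_of_mem_interlacingBox hx hy)
  · exact prod_nonneg fun r _ ↦ Real.rpow_nonneg (crossFactor_nonneg hx (hy r trivial)) _

lemma measurable_aIntegrand (n : ℕ) (k : ℝ) (x l : Fin (n + 1) → ℝ) :
    Measurable (aIntegrand n k x l) := by
  unfold aIntegrand
  refine Measurable.mul (Measurable.mul (by fun_prop) (by fun_prop)) ?_
  refine Finset.measurable_fun_prod _ fun r _ ↦ Measurable.pow_const ?_ _
  refine Finset.measurable_fun_prod _ fun s _ ↦ ?_
  split_ifs <;> fun_prop

/-- The product of the factors of the integrand in `m + 1` variables that do not involve the last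
variable. -/
noncomputable def initFactor (k : ℝ) (x l : Fin (m + 1 + 1) → ℝ) (z : Fin m → ℝ) : ℝ :=
  Real.exp (-∑ i : Fin m, (l i.castSucc.castSucc - l (Fin.last (m + 1))) *
      (x i.castSucc.castSucc - z i)) *
    (∏ i : Fin m, ∏ j ∈ Ioi i,
      pairFactor k (l i.castSucc.castSucc - l j.castSucc.castSucc) (z i - z j)) *
    ∏ r : Fin m, crossFactor x r.castSucc (z r) ^ (k - 1)

/-- The product of the factors of the integrand in `m + 1` variables that involve the last variable
`t`, except the one singular at the lower endpoint `t = x (Fin.last (m + 1))`. -/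
noncomputable def lastFactor (k : ℝ) (x l : Fin (m + 1 + 1) → ℝ) (z : Fin m → ℝ) (t : ℝ) : ℝ :=
  Real.exp (-((l (Fin.last m).castSucc - l (Fin.last (m + 1))) * (x (Fin.last m).castSucc - t))) *
    (∏ i : Fin m, pairFactor k (l i.castSucc.castSucc - l (Fin.last m).castSucc) (z i - t)) *
    (∏ s : Fin (m + 1), divOneAdd (x s.castSucc - t)) ^ (k - 1)

variable {x l : Fin (m + 1 + 1) → ℝ} {z : Fin m → ℝ}

lemma castSucc_last_le (hx : Antitone x) (i : Fin (m + 1)) :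
    x (Fin.last m).castSucc ≤ x i.castSucc :=
  hx (Fin.castSucc_le_castSucc_iff.2 i.le_last)

lemma aIntegrand_snoc (hx : Antitone x) {t : ℝ}
    (ht : t ∈ Set.Icc (x (Fin.last (m + 1))) (x (Fin.last m).castSucc)) :
    aIntegrand (m + 1) k x l (Fin.snoc (α := fun _ ↦ ℝ) z t) =
      initFactor k x l z * lastFactor k x l z t *
        divOneAdd (t - x (Fin.last (m + 1))) ^ (k - 1) := by
  have hprod := prod_divOneAdd_sub_nonneg (castSucc_last_le hx) ht.2
  rw [aIntegrand_eq, Fin.sum_univ_castSucc, prod_prod_Ioi_castSucc, Fin.prod_univ_castSucc]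
  simp only [Fin.snoc_castSucc, Fin.snoc_last]
  rw [crossFactor_last, Real.mul_rpow hprod (divOneAdd_nonneg (sub_nonneg.2 ht.1)), neg_add,
    Real.exp_add, initFactor, lastFactor]
  ring

lemma le_of_mem_interlacingBox_comp_castSucc (hx : Antitone x)
    (hz : z ∈ interlacingBox (x ∘ Fin.castSucc)) (i : Fin m) :
    x (Fin.last m).castSucc ≤ z i :=
  (hx (Fin.succ_le_castSucc_iff.2 i.castSucc_lt_last)).trans (hz i trivial).1

lemma initFactor_nonneg (hx : Antitone x) (hl : Antitone l)
    (hz : z ∈ interlacingBox (x ∘ Fin.castSucc)) :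
    0 ≤ initFactor k x l z := by
  have hcast : Monotone fun i : Fin m ↦ i.castSucc.castSucc :=
    (Fin.strictMono_castSucc.comp Fin.strictMono_castSucc).monotone
  refine mul_nonneg (mul_nonneg (Real.exp_nonneg _) ?_) ?_
  · exact prod_prod_pairFactor_nonneg (hl.comp_monotone hcast)
      (antitone_of_mem_interlacingBox (hx.comp_monotone Fin.strictMono_castSucc.monotone) hz)
  · exact prod_nonneg fun r _ ↦ Real.rpow_nonneg (crossFactor_nonneg hx (hz r trivial)) _

lemma lastFactor_nonneg (hx : Antitone x) (hl : Antitone l)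
    (hz : z ∈ interlacingBox (x ∘ Fin.castSucc)) {t : ℝ} (ht : t ≤ x (Fin.last m).castSucc) :
    0 ≤ lastFactor k x l z t :=
  mul_nonneg
    (mul_nonneg (Real.exp_nonneg _) (prod_pairFactor_sub_nonneg
      (fun i ↦ sub_nonneg.2 (castSucc_last_le hl i.castSucc))
      (le_of_mem_interlacingBox_comp_castSucc hx hz) ht))
    (Real.rpow_nonneg (prod_divOneAdd_sub_nonneg (castSucc_last_le hx) ht) _)

/-- The constant `K` in `lastFactor k x l z s ≤ K * lastFactor k x l z t` for `s ≤ t` at comparable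
distances from the upper endpoint. -/
noncomputable def lastFactorConst (m : ℕ) (k : ℝ) : ℝ :=
  (4 * 4 ^ |k - 1|) ^ m * (4 ^ (m + 1)) ^ |k - 1|

lemma lastFactorConst_nonneg (m : ℕ) (k : ℝ) : 0 ≤ lastFactorConst m k := by
  unfold lastFactorConst
  positivity

lemma lastFactor_le_mul (hk : 0 ≤ k) (hx : Antitone x) (hl : Antitone l)
    (hz : z ∈ interlacingBox (x ∘ Fin.castSucc)) {s t : ℝ} (hst : s ≤ t)
    (ht : t ≤ x (Fin.last m).castSucc)
    (hfour : x (Fin.last m).castSucc - s ≤ 4 * (x (Fin.last m).castSucc - t)) :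
    lastFactor k x l z s ≤ lastFactorConst m k * lastFactor k x l z t := by
  have hlm : 0 ≤ l (Fin.last m).castSucc - l (Fin.last (m + 1)) :=
    sub_nonneg.2 (hl (Fin.le_last _))
  have hΛ (i : Fin m) : 0 ≤ l i.castSucc.castSucc - l (Fin.last m).castSucc :=
    sub_nonneg.2 (castSucc_last_le hl i.castSucc)
  have hz' := le_of_mem_interlacingBox_comp_castSucc hx hz
  have hpair := prod_pairFactor_sub_le_mul hk hΛ hz' hst ht (by norm_num) hfour
  have hpair₀ := prod_pairFactor_sub_nonneg (k := k) hΛ hz' (hst.trans ht)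
  have hcross := prod_divOneAdd_sub_rpow_le_mul (p := k - 1) (castSucc_last_le hx) hst ht
    (by norm_num) hfour
  have hcross₀ : 0 ≤ (∏ i : Fin (m + 1), divOneAdd (x i.castSucc - s)) ^ (k - 1) :=
    Real.rpow_nonneg (prod_divOneAdd_sub_nonneg (castSucc_last_le hx) (hst.trans ht)) _
  rw [Fintype.card_fin] at hpair hcross
  have hexp : Real.exp
        (-((l (Fin.last m).castSucc - l (Fin.last (m + 1))) * (x (Fin.last m).castSucc - s))) ≤
      Real.exp
        (-((l (Fin.last m).castSucc - l (Fin.last (m + 1))) * (x (Fin.last m).castSucc - t))) := by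
    gcongr
  unfold lastFactor lastFactorConst
  refine (mul_le_mul (mul_le_mul hexp hpair hpair₀ (Real.exp_nonneg _)) hcross hcross₀
    (mul_nonneg (Real.exp_nonneg _) (hpair₀.trans hpair))).trans_eq ?_
  ring

lemma setLIntegral_aIntegrand_snoc_le (hk : 0 < k) (hx : Antitone x) (hl : Antitone l)
    (hz : z ∈ interlacingBox (x ∘ Fin.castSucc)) :
    ∫⁻ t in Set.Icc (x (Fin.last m).succ) (x (Fin.last m).castSucc),
        ENNReal.ofReal (aIntegrand (m + 1) k x l (Fin.snoc (α := fun _ ↦ ℝ) z t)) ≤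
      ENNReal.ofReal (halvingConst k (lastFactorConst m k)) *
        ∫⁻ t in Set.Icc ((x (Fin.last m).castSucc + x (Fin.last m).succ) / 2)
            (x (Fin.last m).castSucc),
          ENNReal.ofReal (aIntegrand (m + 1) k x l (Fin.snoc (α := fun _ ↦ ℝ) z t)) := by
  set a := x (Fin.last m).succ with ha
  set b := x (Fin.last m).castSucc
  have hab : a ≤ b := hx Fin.castSucc_lt_succ.le
  obtain ⟨M, hM⟩ : ∃ M, b = a + 2 * M := ⟨(b - a) / 2, by ring⟩
  have hmid : (b + a) / 2 = a + M := by linarith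
  have hA : 0 ≤ initFactor k x l z := initFactor_nonneg hx hl hz
  have hsnoc (c : ℝ) (hc : a ≤ c) :
      ∫⁻ t in Set.Icc c b,
          ENNReal.ofReal (aIntegrand (m + 1) k x l (Fin.snoc (α := fun _ ↦ ℝ) z t)) =
        ∫⁻ t in Set.Icc c b, ENNReal.ofReal
          (initFactor k x l z * lastFactor k x l z t * divOneAdd (t - a) ^ (k - 1)) :=
    setLIntegral_congr_fun measurableSet_Icc fun t ht ↦ by
      rw [aIntegrand_snoc hx ⟨hc.trans ht.1, ht.2⟩, ha, Fin.succ_last]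
  rw [hsnoc a le_rfl, hsnoc _ (by linarith), hmid, hM]
  refine setLIntegral_Icc_le_halvingConst_mul hk (by linarith) (lastFactorConst_nonneg m k)
    (mul_nonneg hA (lastFactor_nonneg hx hl hz (by linarith))) fun s t _ hst htb hfour ↦ ?_
  rw [← hM] at htb hfour
  rw [mul_left_comm]
  gcongr
  exact lastFactor_le_mul hk.le hx hl hz hst htb hfour

lemma setLIntegral_interlacingBox_le (hk : 0 < k) (hx : Antitone x) (hl : Antitone l) :
    ∫⁻ y in interlacingBox x, ENNReal.ofReal (aIntegrand (m + 1) k x l y) ≤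
      ENNReal.ofReal (halvingConst k (lastFactorConst m k)) *
        ∫⁻ y in upperInterlacingBox x, ENNReal.ofReal (aIntegrand (m + 1) k x l y) := by
  refine setLIntegral_univ_pi_le_of_snoc (measurable_aIntegrand _ k x l).ennreal_ofReal
    ENNReal.ofReal_ne_top (fun _ ↦ measurableSet_Icc) (fun j ↦ ?_) fun z hz ↦ ?_
  · simp [j.is_lt.ne]
  · simpa using setLIntegral_aIntegrand_snoc_le hk hx hl hz

end Interlacing

theorem stmt_10_general (n : ℕ) (hn : 1 ≤ n) (k : ℝ) (hk : 0 < k) :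
    ∃ C₁ C₂ : ℝ, 0 < C₁ ∧ 0 < C₂ ∧ ∀ x l : Fin (n + 1) → ℝ,
      Antitone x → Antitone l →
      C₁ * (∫ y in Set.univ.pi fun j : Fin n => Set.Icc (x j.succ) (x j.castSucc),
              aIntegrand n k x l y) ≤
          (∫ y in Set.univ.pi fun j : Fin n =>
              Set.Icc (if (j : ℕ) = n - 1 then (x j.castSucc + x j.succ) / 2 else x j.succ)
                (x j.castSucc),
            aIntegrand n k x l y) ∧
        (∫ y in Set.univ.pi fun j : Fin n =>
              Set.Icc (if (j : ℕ) = n - 1 then (x j.castSucc + x j.succ) / 2 else x j.succ)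
                (x j.castSucc),
            aIntegrand n k x l y) ≤
          C₂ * (∫ y in Set.univ.pi fun j : Fin n => Set.Icc (x j.succ) (x j.castSucc),
              aIntegrand n k x l y) := by
  obtain ⟨m, rfl⟩ := Nat.exists_eq_add_of_le' hn
  have hC : 0 < halvingConst k (lastFactorConst m k) :=
    halvingConst_pos hk (lastFactorConst_nonneg m k)
  refine ⟨(halvingConst k (lastFactorConst m k))⁻¹, 1, inv_pos.2 hC, one_pos, fun x l hx hl ↦ ?_⟩
  have ⟨hlower, hupper⟩ := setIntegral_le_mul_and_le_of_setLIntegral_le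
    (measurableSet_interlacingBox x) (upperInterlacingBox_subset hx)
    (measurable_aIntegrand (m + 1) k x l).aestronglyMeasurable
    (fun _ ↦ aIntegrand_nonneg hx hl) hC.le (setLIntegral_interlacingBox_le hk hx hl)
  exact ⟨(inv_mul_le_iff₀ hC).2 hlower, hupper.trans_eq (one_mul _).symm⟩

theorem stmt_10 (n : ℕ) (hn : 1 ≤ n) (k : ℝ) (hk : 0 < k) :
    ∃ C₁ C₂ : ℝ, 0 < C₁ ∧ 0 < C₂ ∧ ∀ x l : Fin (n + 1) → ℝ,
      Antitone x → Antitone l →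
      (∀ i : Fin n, x i.castSucc - x i.succ ≤
        x (⟨n - 1, by omega⟩ : Fin (n + 1)) - x (Fin.last n)) →
      C₁ * (∫ y in Set.univ.pi fun j : Fin n => Set.Icc (x j.succ) (x j.castSucc),
              aIntegrand n k x l y) ≤
          (∫ y in Set.univ.pi fun j : Fin n =>
              Set.Icc (if (j : ℕ) = n - 1 then (x j.castSucc + x j.succ) / 2 else x j.succ)
                (x j.castSucc),
            aIntegrand n k x l y) ∧
        (∫ y in Set.univ.pi fun j : Fin n =>
              Set.Icc (if (j : ℕ) = n - 1 then (x j.castSucc + x j.succ) / 2 else x j.succ)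
                (x j.castSucc),
            aIntegrand n k x l y) ≤
          C₂ * (∫ y in Set.univ.pi fun j : Fin n => Set.Icc (x j.succ) (x j.castSucc),
              aIntegrand n k x l y) := by
  obtain ⟨C₁, C₂, hC₁, hC₂, h⟩ := stmt_10_general n hn k hk
  exact ⟨C₁, C₂, hC₁, hC₂, fun x l hx hl _ ↦ h x l hx hl⟩
end

section
/- For all real t with 0 ≤ t ≤ log 2 and all r ∈ [0,1], one has r t ≤ log(cosh t + r sinh t) − log(cosh t − r sinh t) ≤ 2 r t. -/
/-!
Factoring out `cosh t` turns the difference of logarithms into `2 artanh (r tanh t)`. The power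
series of `artanh` has no constant term and nonnegative coefficients, so on `[0, 1)` it dominates
its linear term and satisfies `artanh (r x) ≤ r artanh x`. At `x = tanh t` this places the
difference between `2 r tanh t` and `2 r t`. Finally `t ≤ sinh t = cosh t tanh t ≤ 2 tanh t` when
`t ≤ log 2`, because `cosh t ≤ exp t`.
-/

open Real

theorem hasSum_artanh {x : ℝ} (hx : |x| < 1) :
    HasSum (fun k : ℕ ↦ x ^ (2 * k + 1) / (2 * k + 1)) (artanh x) := by
  obtain ⟨hneg, hpos⟩ := abs_lt.mp hx
  have hlog : artanh x = 1 / 2 * (log (1 + x) - log (1 - x)) := by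
    rw [artanh_eq_half_log ⟨hneg.le, hpos.le⟩, log_div (by linarith) (by linarith)]
  rw [hlog]
  refine ((hasSum_log_sub_log_of_abs_lt_one hx).mul_left (1 / 2)).congr_fun fun k ↦ ?_
  ring

theorem self_le_artanh {x : ℝ} (hx₀ : 0 ≤ x) (hx₁ : x < 1) : x ≤ artanh x := by
  have hsum := hasSum_artanh (abs_lt.mpr ⟨by linarith, hx₁⟩)
  simpa using le_hasSum hsum 0 fun k _ ↦ by positivity

theorem artanh_mul_le_mul_artanh {r x : ℝ} (hr₀ : 0 ≤ r) (hr₁ : r ≤ 1) (hx₀ : 0 ≤ x)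
    (hx₁ : x < 1) : artanh (r * x) ≤ r * artanh x := by
  have hrx : r * x < 1 := (mul_le_of_le_one_left hx₀ hr₁).trans_lt hx₁
  have hsum_mul := hasSum_artanh (abs_lt.mpr ⟨by linarith [mul_nonneg hr₀ hx₀], hrx⟩)
  have hsum := hasSum_artanh (abs_lt.mpr ⟨by linarith, hx₁⟩)
  refine hasSum_le (fun k ↦ ?_) hsum_mul (hsum.mul_left r)
  have hpow : r ^ (2 * k + 1) ≤ r := pow_le_of_le_one hr₀ hr₁ (Nat.succ_ne_zero _)
  rw [mul_pow, ← mul_div_assoc]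
  gcongr

theorem abs_mul_tanh_lt_one {r : ℝ} (hr : |r| ≤ 1) (t : ℝ) : |r * tanh t| < 1 := by
  rw [abs_mul]
  exact (mul_le_of_le_one_left (abs_nonneg _) hr).trans_lt (abs_tanh_lt_one t)

theorem cosh_mul_tanh (t : ℝ) : cosh t * tanh t = sinh t := by
  rw [tanh_eq_sinh_div_cosh, mul_div_cancel₀ _ (cosh_pos t).ne']

theorem log_cosh_add_sub_log_cosh_sub {r : ℝ} (hr : |r| ≤ 1) (t : ℝ) :
    log (cosh t + r * sinh t) - log (cosh t - r * sinh t) = 2 * artanh (r * tanh t) := by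
  obtain ⟨hneg, hpos⟩ := abs_lt.mp (abs_mul_tanh_lt_one hr t)
  have hcosh : cosh t ≠ 0 := (cosh_pos t).ne'
  have hadd : cosh t + r * sinh t = cosh t * (1 + r * tanh t) := by rw [← cosh_mul_tanh]; ring
  have hsub : cosh t - r * sinh t = cosh t * (1 - r * tanh t) := by rw [← cosh_mul_tanh]; ring
  have hadd_ne : 1 + r * tanh t ≠ 0 := by linarith
  have hsub_ne : 1 - r * tanh t ≠ 0 := by linarith
  rw [hadd, hsub, log_mul hcosh hadd_ne, log_mul hcosh hsub_ne,
    artanh_eq_half_log ⟨hneg.le, hpos.le⟩, log_div hadd_ne hsub_ne]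
  ring

theorem tanh_nonneg {t : ℝ} (ht : 0 ≤ t) : 0 ≤ tanh t := by
  rw [tanh_eq_sinh_div_cosh]
  exact div_nonneg (sinh_nonneg_iff.mpr ht) (cosh_pos t).le

theorem cosh_le_exp {t : ℝ} (ht : 0 ≤ t) : cosh t ≤ exp t := by
  rw [← cosh_add_sinh]
  exact le_add_of_nonneg_right (sinh_nonneg_iff.mpr ht)

theorem self_le_mul_tanh_of_le_log {c t : ℝ} (hc : 0 < c) (ht₀ : 0 ≤ t) (ht : t ≤ log c) :
    t ≤ c * tanh t := by
  have hcosh : cosh t ≤ c := (cosh_le_exp ht₀).trans ((le_log_iff_exp_le hc).mp ht)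
  calc
    t ≤ sinh t := self_le_sinh_iff.mpr ht₀
    _ = cosh t * tanh t := (cosh_mul_tanh t).symm
    _ ≤ c * tanh t := mul_le_mul_of_nonneg_right hcosh (tanh_nonneg ht₀)

theorem stmt_13_general {t r : ℝ} (ht : 0 ≤ t) (hr₀ : 0 ≤ r) (hr₁ : r ≤ 1) :
    2 * r * tanh t ≤ log (cosh t + r * sinh t) - log (cosh t - r * sinh t) ∧
      log (cosh t + r * sinh t) - log (cosh t - r * sinh t) ≤ 2 * r * t := by
  have hr : |r| ≤ 1 := abs_le.mpr ⟨by linarith, hr₁⟩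
  have hlower : r * tanh t ≤ artanh (r * tanh t) :=
    self_le_artanh (mul_nonneg hr₀ (tanh_nonneg ht)) (abs_lt.mp (abs_mul_tanh_lt_one hr t)).2
  have hupper : artanh (r * tanh t) ≤ r * artanh (tanh t) :=
    artanh_mul_le_mul_artanh hr₀ hr₁ (tanh_nonneg ht) (tanh_lt_one t)
  rw [artanh_tanh] at hupper
  rw [log_cosh_add_sub_log_cosh_sub hr]
  constructor <;> linarith

theorem stmt_13 (t r : ℝ) (ht0 : 0 ≤ t) (ht : t ≤ Real.log 2)
    (hr0 : 0 ≤ r) (hr1 : r ≤ 1) :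
    r * t ≤ Real.log (Real.cosh t + r * Real.sinh t) -
        Real.log (Real.cosh t - r * Real.sinh t) ∧
      Real.log (Real.cosh t + r * Real.sinh t) -
        Real.log (Real.cosh t - r * Real.sinh t) ≤ 2 * r * t := by
  have htanh : t ≤ 2 * tanh t := self_le_mul_tanh_of_le_log two_pos ht0 ht
  exact (stmt_13_general ht0 hr0 hr1).imp_left fun hlower ↦ by
    linarith [mul_le_mul_of_nonneg_left htanh hr0]
end

section
/- For all real t with 0 ≤ t ≤ log 2, one has t − log(cosh t + (sinh t)/2) ≥ t/8. -/
/-!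
Factoring out `exp t` gives `cosh t + a * sinh t = exp t * y` with
`y = 1 - (1 - a) / 2 * (1 - exp (-(2 * t)))`, so `t - log (cosh t + a * sinh t) = -log y`, which is
at least `1 - y`. Since `1 - exp (-(2 * t))` is at least `2 * t / (1 + 2 * t)`, the quantity is
bounded below by `(1 - a) * t / (1 + 2 * t)`, and this is linear in `t` on bounded intervals.
For `a = 1 / 2`, the slope `1 / 8` is reached as long as `1 + 2 * t ≤ 4`.
-/

open Real

theorem div_one_add_le_one_sub_exp_neg {s : ℝ} (hs : -1 < s) : s / (1 + s) ≤ 1 - exp (-s) := by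
  have hs' : 0 < 1 + s := by linarith
  calc s / (1 + s) = 1 - (1 + s)⁻¹ := by field_simp; ring
    _ ≤ 1 - (exp s)⁻¹ := by gcongr; linarith [add_one_le_exp s]
    _ = 1 - exp (-s) := by rw [exp_neg]

theorem cosh_add_mul_sinh_eq_exp_mul (a t : ℝ) :
    cosh t + a * sinh t = exp t * (1 - (1 - a) / 2 * (1 - exp (-(2 * t)))) := by
  have hexp : exp t * exp (-(2 * t)) = exp (-t) := by rw [← exp_add]; ring_nf
  rw [cosh_eq, sinh_eq]
  linear_combination (a - 1) / 2 * hexp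

theorem mul_one_sub_exp_neg_le_sub_log_cosh_add_mul_sinh {a t : ℝ}
    (hpos : 0 < cosh t + a * sinh t) :
    (1 - a) / 2 * (1 - exp (-(2 * t))) ≤ t - log (cosh t + a * sinh t) := by
  rw [cosh_add_mul_sinh_eq_exp_mul] at hpos ⊢
  have hfactor := pos_of_mul_pos_right hpos (exp_pos t).le
  rw [log_mul (exp_ne_zero t) hfactor.ne', log_exp]
  linarith [log_le_sub_one_of_pos hfactor]

theorem mul_div_le_sub_log_cosh_add_mul_sinh {a t : ℝ} (ha : a ≤ 1) (ht : -1 / 2 < t)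
    (hpos : 0 < cosh t + a * sinh t) :
    (1 - a) * t / (1 + 2 * t) ≤ t - log (cosh t + a * sinh t) := by
  have : 0 ≤ (1 - a) / 2 := by linarith
  calc (1 - a) * t / (1 + 2 * t) = (1 - a) / 2 * (2 * t / (1 + 2 * t)) := by ring
    _ ≤ (1 - a) / 2 * (1 - exp (-(2 * t))) := by
      gcongr
      exact div_one_add_le_one_sub_exp_neg (by linarith)
    _ ≤ t - log (cosh t + a * sinh t) := mul_one_sub_exp_neg_le_sub_log_cosh_add_mul_sinh hpos

theorem stmt_14_general {a t : ℝ} (ha : a ≤ 1) (ht0 : 0 ≤ t) (ht : t ≤ 3 / 2)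
    (hpos : 0 < cosh t + a * sinh t) :
    (1 - a) * t / 4 ≤ t - log (cosh t + a * sinh t) := by
  have : 0 ≤ (1 - a) * t := mul_nonneg (by linarith) ht0
  calc (1 - a) * t / 4 ≤ (1 - a) * t / (1 + 2 * t) := by gcongr; linarith
    _ ≤ t - log (cosh t + a * sinh t) :=
      mul_div_le_sub_log_cosh_add_mul_sinh ha (by linarith) hpos

theorem stmt_14 (t : ℝ) (ht0 : 0 ≤ t) (ht : t ≤ Real.log 2) :
    t / 8 ≤ t - Real.log (Real.cosh t + Real.sinh t / 2) := by
  rw [← one_div_mul_eq_div 2 (sinh t)]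
  have hpos : 0 < cosh t + 1 / 2 * sinh t := by
    linarith [cosh_pos t, sinh_nonneg_iff.mpr ht0]
  linarith [stmt_14_general (by norm_num) ht0 (by linarith [log_two_lt_d9]) hpos]
end
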